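/- arXiv:2208.04175 — 2 statements merged into one kernel-verified Lean document; each statement's English description precedes it below -/
import Mathlib

section
/- Let w be a word with m letters 𝗇 and n letters 𝖾. Then there exist polynomials c_0, c_1, …, c_{m_w} in q with nonnegative integer coefficients such that in the path algebra 𝒫 one has w = Σ_{k=0}^{m_w} (−1)^{m_w−k} · c_k · δ_k, where δ_k = 𝖾^{n−k}(𝗇𝖾)^k𝗇^{m−k} are the staircase monomials. In particular, in the (unique) expansion of w in the staircase basis of 𝒫_{m,n}, the coefficient of δ_k vanishes for k > m_w. -/
noncomputable section

/-- The base field `F = ℂ(q)`. -/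
abbrev F : Type := RatFunc ℂ

/-- The indeterminate `q`. -/
def qq : F := RatFunc.X

/-- The `q`-integer `[j]_q = 1 + q + ⋯ + q^(j-1)`. -/
def qint (j : ℕ) : F := ∑ i ∈ Finset.range j, qq ^ i

/-- The `q`-factorial `[j]_q! = [1]_q ⋯ [j]_q`. -/
def qfact (j : ℕ) : F := ∏ i ∈ Finset.range j, qint (i + 1)

/-- Modular relations defining the path algebra `𝒫`; the letter `true` is `𝗇`,
the letter `false` is `𝖾`. -/
inductive PathRel : FreeAlgebra F Bool → FreeAlgebra F Bool → Prop where
  | mod1 : PathRel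
      ((1 + qq) • (FreeAlgebra.ι F false * FreeAlgebra.ι F true * FreeAlgebra.ι F false))
      (qq • (FreeAlgebra.ι F false * FreeAlgebra.ι F false * FreeAlgebra.ι F true) +
        FreeAlgebra.ι F true * FreeAlgebra.ι F false * FreeAlgebra.ι F false)
  | mod2 : PathRel
      ((1 + qq) • (FreeAlgebra.ι F true * FreeAlgebra.ι F false * FreeAlgebra.ι F true))
      (qq • (FreeAlgebra.ι F false * FreeAlgebra.ι F true * FreeAlgebra.ι F true) +
        FreeAlgebra.ι F true * FreeAlgebra.ι F true * FreeAlgebra.ι F false)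

/-- The path algebra `𝒫`. -/
abbrev PathAlg : Type := RingQuot PathRel

/-- The generator `𝗇` of `𝒫`. -/
def Pn : PathAlg := RingQuot.mkAlgHom F PathRel (FreeAlgebra.ι F true)

/-- The generator `𝖾` of `𝒫`. -/
def Pe : PathAlg := RingQuot.mkAlgHom F PathRel (FreeAlgebra.ι F false)

/-- The element of `𝒫` determined by a word in `𝗇` (`true`) and `𝖾` (`false`). -/
def wordElem (w : List Bool) : PathAlg := (w.map fun b => if b then Pn else Pe).prod

/-- `𝒫_{m,n}`: the span of words with `m` letters `𝗇` and `n` letters `𝖾`. -/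
def Pmn (m n : ℕ) : Submodule F PathAlg :=
  Submodule.span F {x | ∃ w : List Bool, w.count true = m ∧ w.count false = n ∧ x = wordElem w}

/-- `lam` (0-indexed list of parts) is a partition contained in the `m × n` box. -/
def IsPartitionIn (m n : ℕ) (lam : ℕ → ℕ) : Prop :=
  (∀ i j, i ≤ j → lam j ≤ lam i) ∧ (∀ i, lam i ≤ n) ∧ (∀ i, m ≤ i → lam i = 0)

/-- `eastBefore w r` = number of east steps (`false`) preceding the `(r+1)`-st
north step (`true`) of `w`. -/
def eastBefore : List Bool → ℕ → ℕ
  | [], _ => 0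
  | true :: _, 0 => 0
  | true :: w, r + 1 => eastBefore w r
  | false :: w, r => eastBefore w r + 1

/-- `northBefore w r` = number of north steps (`true`) preceding the `(r+1)`-st
east step (`false`) of `w`. -/
def northBefore : List Bool → ℕ → ℕ
  | [], _ => 0
  | false :: _, 0 => 0
  | false :: w, r + 1 => northBefore w r
  | true :: w, r => northBefore w r + 1

/-- The partition `λ(w)` of a word with `m` letters `𝗇`, as a 0-indexed function:
row `i` (from the top) of the partition has `eastBefore w (m-1-i)` cells. -/
def wordLam (m : ℕ) (w : List Bool) : ℕ → ℕ :=
  fun i => if i < m then eastBefore w (m - 1 - i) else 0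

/-- The word `w(λ)` of a partition `λ ⊆ m × n` (given as 0-indexed `lam : ℕ → ℕ`). -/
def wordOf (m n : ℕ) (lam : ℕ → ℕ) : List Bool :=
  ((List.range m).flatMap fun k =>
    List.replicate (lam (m - 1 - k) - lam (m - k)) false ++ [true]) ++
    List.replicate (n - lam 0) false

/-- The rook in column `j` of the placement `ρ` lies inside the Ferrers board of `lam`. -/
def rookInside (m n : ℕ) (lam : ℕ → ℕ) (ρ : Fin n ↪ Fin m) (j : Fin n) : Prop :=
  (j : ℕ) < lam (ρ j)

/-- The cell in row `i` (0-indexed from the top) and column `j` (0-indexed from the left)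
is unattacked for the maximal non-attacking rook placement `ρ` (with the Ferrers board of
`lam` drawn in the top-left corner of the `m × n` board). -/
def Unattacked (m n : ℕ) (lam : ℕ → ℕ) (ρ : Fin n ↪ Fin m) (i : Fin m) (j : Fin n) : Prop :=
  ρ j ≠ i ∧ ¬ ((ρ j : ℕ) < (i : ℕ)) ∧
    (if (j : ℕ) < lam i then
      (∀ j' : Fin n, ρ j' = i → ¬ (j' < j)) ∧
      (∀ j' : Fin n, ρ j' = i → j < j' → (j' : ℕ) < lam i)
    else
      ∀ j' : Fin n, ρ j' = i → j' < j → (j' : ℕ) < lam i)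

/-- `stat ρ` = number of unattacked cells. -/
def statRook (m n : ℕ) (lam : ℕ → ℕ) (ρ : Fin n ↪ Fin m) : ℕ :=
  Set.ncard {p : Fin m × Fin n | Unattacked m n lam ρ p.1 p.2}

/-- The `q`-hit number `H_k^{m,n}(λ)`. -/
def qHit (m n : ℕ) (lam : ℕ → ℕ) (k : ℕ) : F :=
  ∑ ρ : Fin n ↪ Fin m,
    if Set.ncard {j : Fin n | rookInside m n lam ρ j} = k then qq ^ statRook m n lam ρ else 0

/-- A Dyck word of size `N`. -/
def IsDyck (N : ℕ) (w : List Bool) : Prop :=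
  w.count true = N ∧ w.count false = N ∧
    ∀ p : ℕ, (w.take p).count false ≤ (w.take p).count true

/-- Adjacency of the Dyck graph `G(D)` of a Dyck word of size `N` on vertices `Fin N`
(0-indexed: vertex `a` is the vertex `a+1` of `{1,…,N}`). -/
def dyckAdj (N : ℕ) (w : List Bool) (a b : Fin N) : Prop :=
  ((a : ℕ) < b ∧ (b : ℕ) < northBefore w a) ∨ ((b : ℕ) < a ∧ (a : ℕ) < northBefore w b)

/-- Proper colorings of the Dyck graph `G(w)` with `ν` colors. -/
def properColorings (N ν : ℕ) (w : List Bool) : Set (Fin N → Fin ν) :=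
  {κ | ∀ a b : Fin N, dyckAdj N w a b → κ a ≠ κ b}

/-- Number of ascents of a coloring. -/
def ascColor (N ν : ℕ) (w : List Bool) (κ : Fin N → Fin ν) : ℕ :=
  Set.ncard {p : Fin N × Fin N | (p.1 : ℕ) < p.2 ∧ dyckAdj N w p.1 p.2 ∧ κ p.1 < κ p.2}

open scoped Classical in
/-- The chromatic quasisymmetric polynomial `X_{G(w)}(x_1,…,x_ν; q)`. -/
def chromX (N ν : ℕ) (w : List Bool) : MvPolynomial (Fin ν) F :=
  ∑ κ : Fin N → Fin ν,
    if κ ∈ properColorings N ν w then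
      MvPolynomial.C (qq ^ ascColor N ν w κ) * ∏ a : Fin N, MvPolynomial.X (κ a)
    else 0

/-- The staircase word `δ_k = 𝖾^{n-k}(𝗇𝖾)^k𝗇^{m-k}`. -/
def deltaWord (m n k : ℕ) : List Bool :=
  List.replicate (n - k) false ++ (List.replicate k [true, false]).flatten ++
    List.replicate (m - k) true

/-- `m_w`: the largest `k` with `λ(w) ⊆ λ(δ_k)`, i.e. such that the path of `δ_k`
lies weakly below the path of `w`. -/
def mw (m n : ℕ) (w : List Bool) : ℕ :=
  Finset.sup ((Finset.range (min m n + 1)).filter fun k =>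
    ∀ i ∈ Finset.range m, wordLam m w i ≤ wordLam m (deltaWord m n k) i) id

/-- The lattice paths of `w` and `d` share the unit step of `w` corresponding to
the letter at (0-indexed) position `p` of `w`. -/
def StepShared (w d : List Bool) (p : ℕ) : Prop :=
  ∃ p' : ℕ, p' < d.length ∧ d[p']? = w[p]? ∧
    (d.take p').count true = (w.take p).count true ∧
    (d.take p').count false = (w.take p).count false

/-- `w` possesses a critical factor: a factor `𝗇^i𝖾` or `𝗇𝖾^i` with `i ≥ 2`, whose run of
repeated letters is maximal within `w`, and whose letters contain a unit step shared by
the lattice paths of `w` and of `δ_{m_w}`. -/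
def HasCriticalFactor (m n : ℕ) (w : List Bool) : Prop :=
  ∃ (x y : List Bool) (i : ℕ), 2 ≤ i ∧
    ((w = x ++ (List.replicate i true ++ [false]) ++ y ∧ x.getLast? ≠ some true ∧
        ∃ p, x.length ≤ p ∧ p < x.length + i + 1 ∧ StepShared w (deltaWord m n (mw m n w)) p) ∨
      (w = x ++ ([true] ++ List.replicate i false) ++ y ∧ y.head? ≠ some false ∧
        ∃ p, x.length ≤ p ∧ p < x.length + i + 1 ∧ StepShared w (deltaWord m n (mw m n w)) p))

/-- Evaluation of a (commutative) polynomial in two variables at the commuting elements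
`s`, `t` of `𝒫`. -/
def evalST (s t : PathAlg) (P : MvPolynomial (Fin 2) F) : PathAlg :=
  ∑ d ∈ P.support, P.coeff d • (s ^ (d 0) * t ^ (d 1))

/-- The conjugate partition: `conjP m lam i = λ'_i = #{rows r : λ_r ≥ i}` (here `i ≥ 1`,
rows 0-indexed, `lam` supported on `[0, m)`). -/
def conjP (m : ℕ) (lam : ℕ → ℕ) (i : ℕ) : ℕ :=
  ((Finset.range m).filter fun r => i ≤ lam r).card

/-- The sequence `b(λ) = (b_1,…,b_n)` (1-indexed `i`) for `λ ⊆ m × n`, `m ≥ n`. -/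
def bSeq (m : ℕ) (lam : ℕ → ℕ) (i : ℕ) : ℤ :=
  if lam (m - i) < i then (m : ℤ) + 1 - i - conjP m lam i else (i : ℤ) - lam (m - i)

/-- The element `wt_i ∈ 𝒫`. -/
def wt (i : ℤ) : PathAlg :=
  if 1 ≤ i then qint i.toNat • (Pn * Pe) - (qq * qint (i - 1).toNat) • (Pe * Pn)
  else (qq ^ i) • (qint (1 - i).toNat • (Pe * Pn) - qint (-i).toNat • (Pn * Pe))

/-- The defining relations of the `q`-Klyachko algebra. -/
def klyRels : Set (MvPolynomial ℤ F) :=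
  {x | ∃ i : ℤ, x = MvPolynomial.C (1 + qq) * (MvPolynomial.X i * MvPolynomial.X i) -
    (MvPolynomial.C qq * (MvPolynomial.X i * MvPolynomial.X (i - 1)) +
      MvPolynomial.X i * MvPolynomial.X (i + 1))}

/-- The `q`-Klyachko algebra `𝒦`. -/
abbrev Kly : Type := MvPolynomial ℤ F ⧸ Ideal.span klyRels

/-- The generator `u_i` of `𝒦`. -/
def uK (i : ℤ) : Kly := Ideal.Quotient.mk (Ideal.span klyRels) (MvPolynomial.X i)

/-- The element `u(λ) = u_{a_1} ⋯ u_{a_m}` of `𝒦`, where `a(λ)` is the area sequence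
of `λ ⊆ m × m` (here `a_{i+1} = (i+1) - λ_{m-i}` with `lam` 0-indexed). -/
def uLam (m : ℕ) (lam : ℕ → ℕ) : Kly :=
  ∏ i ∈ Finset.range m, uK ((i : ℤ) + 1 - lam (m - 1 - i))

/-- The partition `λ(G(D))` of a Dyck word of size `N`, 0-indexed:
`λ_{i+1} = N - h_{i+1}(D)`. -/
def lamG (N : ℕ) (D : List Bool) : ℕ → ℕ :=
  fun i => if i < N then N - northBefore D i else 0

/-- The number of nonzero parts of `λ(G(D))`. -/
def ellG (N : ℕ) (D : List Bool) : ℕ :=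
  ((Finset.range N).filter fun i => N - northBefore D i ≠ 0).card

/-- The Dyck graph `G(D)` is abelian. -/
def IsAbelian (N : ℕ) (D : List Bool) : Prop := lamG N D 0 + ellG N D ≤ N

/-- `r` is an acyclic orientation of the graph with adjacency `adj` on `Fin N`. -/
def IsAcyclicOrientation (N : ℕ) (adj : Fin N → Fin N → Prop)
    (r : Fin N → Fin N → Bool) : Prop :=
  (∀ a b, r a b = true → adj a b) ∧
  (∀ a b, adj a b → (r a b = true ↔ ¬ r b a = true)) ∧
  (∀ a, ¬ Relation.TransGen (fun u v => r u v = true) a a)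

/-- Number of ascents of an orientation. -/
def ascOrient (N : ℕ) (r : Fin N → Fin N → Bool) : ℕ :=
  Set.ncard {p : Fin N × Fin N | r p.1 p.2 = true ∧ (p.1 : ℕ) < p.2}

/-- Remove from `S` the sources of the orientation restricted to `S`. -/
def peel (N : ℕ) (r : Fin N → Fin N → Bool) (S : Set (Fin N)) : Set (Fin N) :=
  {v ∈ S | ∃ u ∈ S, r u v = true}

/-- Number of sources of the orientation restricted to `S`. -/
def numSources (N : ℕ) (r : Fin N → Fin N → Bool) (S : Set (Fin N)) : ℕ :=
  Set.ncard {v ∈ S | ∀ u ∈ S, ¬ r u v = true}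

open scoped Classical in
/-- `initial(A)`: the number of leading entries of the source sequence equal to `2`. -/
def initialA (N : ℕ) (r : Fin N → Fin N → Bool) : ℕ :=
  Finset.sup ((Finset.range (N + 1)).filter fun j =>
    ∀ k < j, numSources N r ((peel N r)^[k] Set.univ) = 2) id

end

/-! ### Combinatorics of heights -/

/-- Final height of a word. -/
def ht (w : List Bool) : ℤ := (w.count true : ℤ) - (w.count false : ℤ)

/-- Minimal height of a word (over all prefixes). -/
def minH : List Bool → ℤ
  | [] => 0
  | true :: w => min 0 (1 + minH w)
  | false :: w => min 0 (-1 + minH w)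

/-- Number of pairs (north step, later east step). -/
def invW : List Bool → ℕ
  | [] => 0
  | true :: w => w.count false + invW w
  | false :: w => invW w

lemma minH_nonpos (w : List Bool) : minH w ≤ 0 := by
  rcases w with _ | ⟨_ | _, w⟩ <;> simp [minH]

lemma ht_append (u v : List Bool) : ht (u ++ v) = ht u + ht v := by
  simp [ht]; ring

lemma minH_append (u v : List Bool) : minH (u ++ v) = min (minH u) (ht u + minH v) := by
  have hv := minH_nonpos v
  induction u with
  | nil => simp [minH, ht, hv]
  | cons b u ih =>
    have hu := minH_nonpos u
    rcases b with _ | _ <;> simp [minH, ih, ht] <;> simp [ht] at ih <;> omega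

lemma invW_append (u v : List Bool) :
    invW (u ++ v) = invW u + invW v + u.count true * v.count false := by
  induction u with
  | nil => simp [invW]
  | cons b u ih =>
    rcases b with _ | _ <;> simp [invW, ih] <;> ring

lemma ht_rep_true (i : ℕ) : ht (List.replicate i true) = i := by
  simp [ht, List.count_replicate]

lemma ht_rep_false (i : ℕ) : ht (List.replicate i false) = -i := by
  simp [ht, List.count_replicate]

lemma minH_rep_true (i : ℕ) : minH (List.replicate i true) = 0 := by
  induction i with
  | zero => simp [minH]
  | succ i ih => simp [List.replicate_succ, minH, ih]

lemma minH_rep_false (i : ℕ) : minH (List.replicate i false) = -i := by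
  induction i with
  | zero => simp [minH]
  | succ i ih => rw [List.replicate_succ, minH, ih]; omega

lemma invW_rep (i : ℕ) (b : Bool) : invW (List.replicate i b) = 0 := by
  induction i with
  | zero => simp [invW]
  | succ i ih => rcases b with _ | _ <;> simp [List.replicate_succ, invW, ih, List.count_replicate]

lemma le_minH_iff (w : List Bool) : ∀ t : ℤ, t ≤ minH w ↔
    t ≤ ht w ∧ ∀ r < w.count true, t ≤ (r : ℤ) - eastBefore w r := by
  induction w with
  | nil => intro t; simp [minH, ht]
  | cons b w ih =>
    intro t
    have hw := minH_nonpos w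
    rcases b with _ | _
    · have h1 : t ≤ minH (false :: w) ↔ t + 1 ≤ minH w := by simp [minH]; omega
      rw [h1, ih]
      apply and_congr
      · simp [ht]; omega
      · have : (List.count true (false :: w)) = List.count true w := by simp
        rw [this]
        refine forall_congr' fun r => forall_congr' fun hr => ?_
        simp [eastBefore]; omega
    · have h1 : t ≤ minH (true :: w) ↔ t ≤ 0 ∧ t - 1 ≤ minH w := by simp [minH]; omega
      rw [h1, ih]
      have : (List.count true (true :: w)) = List.count true w + 1 := by simp
      rw [this]
      constructor
      · rintro ⟨h0, h2, h3⟩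
        refine ⟨by simp [ht] at *; omega, ?_⟩
        rintro (_ | r) hr
        · simpa [eastBefore] using h0
        · have := h3 r (by omega)
          simp [eastBefore]; omega
      · rintro ⟨h2, h3⟩
        refine ⟨by simpa [eastBefore] using h3 0 (by omega), by simp [ht] at *; omega, ?_⟩
        intro r hr
        have := h3 (r + 1) (by omega)
        simp [eastBefore] at this; omega

lemma eastBefore_le (w : List Bool) (r : ℕ) : eastBefore w r ≤ w.count false := by
  induction w generalizing r with
  | nil => simp [eastBefore]
  | cons b w ih =>
    rcases b with _ | _
    · simpa [eastBefore] using ih r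
    · rcases r with _ | r
      · simp [eastBefore]
      · simpa [eastBefore] using ih r

lemma eastBefore_rep_false (a r : ℕ) (v : List Bool) :
    eastBefore (List.replicate a false ++ v) r = a + eastBefore v r := by
  induction a with
  | zero => simp
  | succ a ih => simp [List.replicate_succ, eastBefore, ih]; omega

lemma eastBefore_rep_true (a r : ℕ) (h : r < a) : eastBefore (List.replicate a true) r = 0 := by
  induction a generalizing r with
  | zero => omega
  | succ a ih =>
    rcases r with _ | r
    · simp [List.replicate_succ, eastBefore]
    · simpa [List.replicate_succ, eastBefore] using ih r (by omega)

lemma eastBefore_stair (k c r : ℕ) (h : r < k + c) :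
    eastBefore ((List.replicate k [true, false]).flatten ++ List.replicate c true) r
      = min r k := by
  induction k generalizing r with
  | zero => simpa using eastBefore_rep_true c r (by omega)
  | succ k ih =>
    rcases r with _ | r
    · simp [List.replicate_succ, eastBefore]
    · have := ih r (by omega)
      simp [List.replicate_succ, eastBefore] at this ⊢
      omega

lemma eastBefore_delta (m n k r : ℕ) (hk : k ≤ min m n) (hr : r < m) :
    eastBefore (deltaWord m n k) r = n - k + min r k := by
  unfold deltaWord
  rw [List.append_assoc, eastBefore_rep_false, eastBefore_stair _ _ _ (by omega)]

lemma mw_eq (m n : ℕ) (w : List Bool) (hn : w.count true = m) (he : w.count false = n) :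
    ((mw m n w : ℕ) : ℤ) = n + minH w := by
  have h0 := minH_nonpos w
  have h1 := (le_minH_iff w (minH w)).1 le_rfl
  have h2 : -(n : ℤ) ≤ minH w := by
    rw [le_minH_iff]
    refine ⟨by simp [ht, he], fun r _ => ?_⟩
    have := eastBefore_le w r
    omega
  have hht : ht w = (m : ℤ) - n := by simp [ht, hn, he]
  have key : ∀ k ≤ min m n, ((∀ i ∈ Finset.range m,
      wordLam m w i ≤ wordLam m (deltaWord m n k) i) ↔ (k : ℤ) ≤ n + minH w) := by
    intro k hk
    have h3 : (k : ℤ) ≤ n + minH w ↔ (k : ℤ) - n ≤ minH w := by omega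
    rw [h3, le_minH_iff]
    constructor
    · intro h
      refine ⟨by omega, fun r hr => ?_⟩
      rw [hn] at hr
      have := h (m - 1 - r) (by simp; omega)
      have h4 : m - 1 - (m - 1 - r) = r := by omega
      rw [wordLam, wordLam, if_pos (by omega), if_pos (by omega), h4,
        eastBefore_delta m n k r hk hr] at this
      omega
    · rintro ⟨_, h⟩ i hi
      have hi : i < m := by simpa using hi
      have := h (m - 1 - i) (by omega)
      rw [wordLam, wordLam, if_pos (by omega), if_pos (by omega),
        eastBefore_delta m n k _ hk (by omega)]
      have := eastBefore_le w (m - 1 - i)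
      omega
  obtain ⟨M, hM⟩ : ∃ M : ℕ, (M : ℤ) = n + minH w := ⟨(n + minH w).toNat, by omega⟩
  have : mw m n w = M := by
    apply le_antisymm
    · apply Finset.sup_le
      intro k hk
      simp only [Finset.mem_filter, Finset.mem_range] at hk
      have := (key k (by omega)).1 (by simpa using hk.2)
      simp only [id]; omega
    · have hMm : M ≤ min m n := by omega
      refine Finset.le_sup (f := id) (b := M) ?_
      simp only [Finset.mem_filter, Finset.mem_range]
      exact ⟨by omega, by simpa using (key M hMm).2 (by omega)⟩
  omega

/-! ### Structure of words -/

lemma run_true (w : List Bool) : ∃ i, w = List.replicate i true ∨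
    ∃ y, w = List.replicate i true ++ false :: y := by
  induction w with
  | nil => exact ⟨0, by simp⟩
  | cons b w ih =>
    rcases b with _ | _
    · exact ⟨0, Or.inr ⟨w, by simp⟩⟩
    · obtain ⟨i, h | ⟨y, h⟩⟩ := ih
      · exact ⟨i + 1, Or.inl (by simp [List.replicate_succ, h])⟩
      · exact ⟨i + 1, Or.inr ⟨y, by simp [List.replicate_succ, h]⟩⟩

lemma run_false (w : List Bool) : ∃ i, w = List.replicate i false ∨
    ∃ y, w = y ++ true :: List.replicate i false := by
  induction w using List.reverseRecOn with
  | nil => exact ⟨0, by simp⟩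
  | append_singleton w b ih =>
    rcases b with _ | _
    · obtain ⟨i, h | ⟨y, h⟩⟩ := ih
      · exact ⟨i + 1, Or.inl (by simp [List.replicate_succ', h])⟩
      · exact ⟨i + 1, Or.inr ⟨y, by simp [List.replicate_succ', h]⟩⟩
    · exact ⟨0, Or.inr ⟨w, by simp⟩⟩

/-- `(𝗇𝖾)^b`. -/
def stair (b : ℕ) : List Bool := (List.replicate b [true, false]).flatten

lemma stair_succ (b : ℕ) : stair (b + 1) = true :: false :: stair b := by
  simp [stair, List.replicate_succ]

lemma stair_add (a b : ℕ) : stair (a + b) = stair a ++ stair b := by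
  rw [stair, List.replicate_add, List.flatten_append]; rfl

lemma ht_stair (b : ℕ) : ht (stair b) = 0 := by
  induction b with
  | zero => simp [stair, ht]
  | succ b ih => rw [stair_succ]; simp [ht] at ih ⊢; omega

lemma minH_stair (b : ℕ) : minH (stair b) = 0 := by
  induction b with
  | zero => simp [stair, minH]
  | succ b ih => rw [stair_succ]; simp [minH, ih]

lemma right_part (N : ℕ) : ∀ y : List Bool, y.length ≤ N → minH y = 0 →
    (∃ b c, y = stair b ++ List.replicate c true) ∨
    ∃ b i z, y = stair b ++ (List.replicate (i + 2) true ++ [false]) ++ z := by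
  induction N with
  | zero =>
    intro y hy _
    left
    exact ⟨0, 0, by simpa [stair] using hy⟩
  | succ N ih =>
    intro y hy h0
    obtain ⟨i, h | ⟨z, h⟩⟩ := run_true y
    · exact Or.inl ⟨0, i, by simpa [stair] using h⟩
    · rcases i with _ | _ | i
      · subst h
        have := minH_nonpos z
        simp [minH] at h0
        omega
      · have hz := minH_nonpos z
        have h1 : minH z = 0 := by
          subst h
          simp [minH] at h0
          omega
        rcases ih z (by subst h; simp at hy; omega) h1 with ⟨b, c, hb⟩ | ⟨b, i, z', hb⟩
        · exact Or.inl ⟨b + 1, c, by rw [h, hb, stair_succ]; simp⟩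
        · exact Or.inr ⟨b + 1, i, z', by rw [h, hb, stair_succ]; simp⟩
      · exact Or.inr ⟨0, i, z, by rw [h]; simp [stair]⟩

lemma left_part (N : ℕ) : ∀ x : List Bool, x.length ≤ N → minH x = ht x →
    (∃ a b, x = List.replicate a false ++ stair b) ∨
    ∃ b i z, x = z ++ ([true] ++ List.replicate (i + 2) false) ++ stair b := by
  induction N with
  | zero =>
    intro y hy _
    left
    exact ⟨0, 0, by simpa [stair] using hy⟩
  | succ N ih =>
    intro y hy h0
    obtain ⟨i, h | ⟨z, h⟩⟩ := run_false y
    · exact Or.inl ⟨i, 0, by simpa [stair] using h⟩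
    · rcases i with _ | _ | i
      · subst h
        rw [minH_append, ht_append] at h0
        have := ((le_minH_iff z (minH z)).1 le_rfl).1
        simp [minH, ht] at h0 this
        omega
      · have h2 := ((le_minH_iff z (minH z)).1 le_rfl).1
        have h1 : minH z = ht z := by
          subst h
          rw [minH_append, ht_append] at h0
          simp [minH, ht] at h0 h2 ⊢
          omega
        rcases ih z (by subst h; simp at hy; omega) h1 with ⟨a, b, hb⟩ | ⟨b, i, z', hb⟩
        · exact Or.inl ⟨a, b + 1, by rw [h, hb, stair_add]; simp [stair]⟩
        · exact Or.inr ⟨b + 1, i, z', by rw [h, hb, stair_add]; simp [stair]⟩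
      · exact Or.inr ⟨0, i, z, by rw [h]; simp [stair]⟩

lemma split_min (w : List Bool) : ∃ x y, w = x ++ y ∧ minH x = ht x ∧ minH y = 0 := by
  induction w with
  | nil => exact ⟨[], [], by simp [minH, ht]⟩
  | cons b w ih =>
    obtain ⟨x, y, h, hx, hy⟩ := ih
    by_cases h0 : minH (b :: w) = 0
    · exact ⟨[], b :: w, by simp [minH, ht], by simp [minH, ht], h0⟩
    · refine ⟨b :: x, y, by simp [h], ?_, hy⟩
      rw [h, minH.eq_def] at h0
      rcases b with _ | _ <;> simp [minH_append, hx, hy] at h0 <;>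
        simp [minH, hx] <;> simp [ht] at * <;> omega

/-! ### Algebra -/

lemma mod1 : (1 + qq) • (Pe * Pn * Pe) = qq • (Pe * Pe * Pn) + Pn * Pe * Pe := by
  have := RingQuot.mkAlgHom_rel F PathRel.mod1
  simpa [Pn, Pe] using this

lemma mod2 : (1 + qq) • (Pn * Pe * Pn) = qq • (Pe * Pn * Pn) + Pn * Pn * Pe := by
  have := RingQuot.mkAlgHom_rel F PathRel.mod2
  simpa [Pn, Pe] using this

lemma qint_succ (j : ℕ) : qint (j + 1) = qint j + qq ^ j := Finset.sum_range_succ _ _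

lemma qint_rec (j : ℕ) : qint (j + 2) = qint (j + 1) * (1 + qq) - qq * qint j := by
  rw [qint_succ (j + 1), qint_succ j]; ring

lemma mod_aux {V : Type*} [AddCommGroup V] [Module F V] (a b q : F) (x y : V) :
    a • ((1 + q) • x - q • y) - (q * b) • x = (a * (1 + q) - q * b) • x - (q * a) • y := by
  simp only [smul_sub, sub_smul, smul_smul, mul_comm a q]
  abel

lemma ne_rel (j : ℕ) : Pn ^ (j + 1) * Pe =
    qint (j + 1) • (Pn * Pe * Pn ^ j) - (qq * qint j) • (Pe * Pn ^ (j + 1)) := by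
  induction j with
  | zero => simp [qint]
  | succ j ih =>
    have h : Pn * Pn * Pe = (1 + qq) • (Pn * Pe * Pn) - qq • (Pe * Pn * Pn) := by
      rw [mod2]; abel
    calc Pn ^ (j + 1 + 1) * Pe = Pn * (Pn ^ (j + 1) * Pe) := by rw [pow_succ']; noncomm_ring
      _ = qint (j + 1) • ((Pn * Pn * Pe) * Pn ^ j)
          - (qq * qint j) • (Pn * Pe * Pn ^ (j + 1)) := by
        rw [ih]; simp only [mul_sub, mul_smul_comm, mul_assoc]
      _ = qint (j + 1) • ((1 + qq) • (Pn * Pe * Pn ^ (j + 1)) - qq • (Pe * Pn ^ (j + 1 + 1)))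
          - (qq * qint j) • (Pn * Pe * Pn ^ (j + 1)) := by
        rw [h]; simp only [sub_mul, smul_mul_assoc, mul_assoc, pow_succ']
      _ = _ := by
        rw [qint_rec]; exact mod_aux _ _ _ _ _

lemma en_rel (j : ℕ) : Pn * Pe ^ (j + 1) =
    qint (j + 1) • (Pe ^ j * Pn * Pe) - (qq * qint j) • (Pe ^ (j + 1) * Pn) := by
  induction j with
  | zero => simp [qint]
  | succ j ih =>
    have h : Pn * Pe * Pe = (1 + qq) • (Pe * Pn * Pe) - qq • (Pe * Pe * Pn) := by
      rw [mod1]; abel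
    calc Pn * Pe ^ (j + 1 + 1) = (Pn * Pe ^ (j + 1)) * Pe := by rw [pow_succ, mul_assoc]
      _ = qint (j + 1) • (Pe ^ j * (Pn * Pe * Pe))
          - (qq * qint j) • (Pe ^ (j + 1) * Pn * Pe) := by
        rw [ih]; simp only [sub_mul, smul_mul_assoc, mul_assoc]
      _ = qint (j + 1) • ((1 + qq) • (Pe ^ (j + 1) * Pn * Pe) - qq • (Pe ^ (j + 1 + 1) * Pn))
          - (qq * qint j) • (Pe ^ (j + 1) * Pn * Pe) := by
        rw [h]; simp only [mul_sub, mul_smul_comm, mul_assoc, pow_succ]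
      _ = _ := by
        rw [qint_rec]; exact mod_aux _ _ _ _ _

lemma wordElem_append (u v : List Bool) : wordElem (u ++ v) = wordElem u * wordElem v := by
  simp [wordElem]

lemma wordElem_rep_true (i : ℕ) : wordElem (List.replicate i true) = Pn ^ i := by
  simp [wordElem]

lemma wordElem_rep_false (i : ℕ) : wordElem (List.replicate i false) = Pe ^ i := by
  simp [wordElem]

lemma wordElem_true : wordElem [true] = Pn := by simp [wordElem]

lemma wordElem_false : wordElem [false] = Pe := by simp [wordElem]

lemma word_rel_ne (x y : List Bool) (j : ℕ) :
    wordElem (x ++ (List.replicate (j + 1) true ++ [false]) ++ y) =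
    qint (j + 1) • wordElem (x ++ ([true] ++ [false] ++ List.replicate j true) ++ y)
    - (qq * qint j) • wordElem (x ++ ([false] ++ List.replicate (j + 1) true) ++ y) := by
  simp only [wordElem_append, wordElem_rep_true, wordElem_true, wordElem_false]
  rw [ne_rel]
  simp only [mul_sub, sub_mul, mul_smul_comm, smul_mul_assoc]

lemma word_rel_en (x y : List Bool) (j : ℕ) :
    wordElem (x ++ ([true] ++ List.replicate (j + 1) false) ++ y) =
    qint (j + 1) • wordElem (x ++ (List.replicate j false ++ [true] ++ [false]) ++ y)
    - (qq * qint j) • wordElem (x ++ (List.replicate (j + 1) false ++ [true]) ++ y) := by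
  simp only [wordElem_append, wordElem_rep_false, wordElem_true, wordElem_false]
  rw [en_rel]
  simp only [mul_sub, sub_mul, mul_smul_comm, smul_mul_assoc]

/-- Evaluation of natural-coefficient polynomials at `q`. -/
noncomputable def evq (p : Polynomial ℕ) : F := Polynomial.eval₂ (Nat.castRingHom F) qq p

/-- Sign-alternating expansion in staircase monomials. -/
def HasExp (m n : ℕ) (M : ℕ) (x : PathAlg) : Prop :=
  ∃ c : ℕ → Polynomial ℕ, (∀ k, M < k → c k = 0) ∧
    x = ∑ k ∈ Finset.range (n + 1), ((-1 : F) ^ (M + k) * evq (c k)) • wordElem (deltaWord m n k)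

lemma exists_qint (j : ℕ) : ∃ p : Polynomial ℕ, evq p = qint j :=
  ⟨∑ i ∈ Finset.range j, Polynomial.X ^ i, by simp [evq, qint, Polynomial.eval₂_finset_sum]⟩

lemma HasExp.combine {m n M : ℕ} {x y z : PathAlg} {j : ℕ}
    (hx : HasExp m n (M + 1) x) (hy : HasExp m n M y)
    (hz : z = qint (j + 1) • x - (qq * qint j) • y) : HasExp m n (M + 1) z := by
  obtain ⟨c, hc, rfl⟩ := hx
  obtain ⟨d, hd, rfl⟩ := hy
  obtain ⟨p, hp⟩ := exists_qint (j + 1)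
  obtain ⟨r, hr⟩ := exists_qint j
  refine ⟨fun k => p * c k + Polynomial.X * r * d k, ?_, ?_⟩
  · intro k hk
    simp [hc k hk, hd k (by omega)]
  · rw [hz, Finset.smul_sum, Finset.smul_sum, ← Finset.sum_sub_distrib]
    refine Finset.sum_congr rfl fun k _ => ?_
    have : evq (p * c k + Polynomial.X * r * d k)
        = qint (j + 1) * evq (c k) + qq * qint j * evq (d k) := by
      rw [← hp, ← hr]; simp [evq, Polynomial.eval₂_add, Polynomial.eval₂_mul]
    rw [this, smul_smul, smul_smul, ← sub_smul]
    congr 1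
    ring

lemma neg_count_le (w : List Bool) : -(w.count false : ℤ) ≤ minH w := by
  rw [le_minH_iff]
  refine ⟨by simp [ht], fun r _ => ?_⟩
  have := eastBefore_le w r
  omega

lemma ht_true : ht [true] = 1 := by simp [ht]

lemma ht_false : ht [false] = -1 := by simp [ht]

lemma minH_true : minH [true] = 0 := by simp [minH]

lemma minH_false : minH [false] = -1 := by simp [minH]

lemma invW_one (b : Bool) : invW [b] = 0 := by rcases b with _ | _ <;> simp [invW]

lemma step_exp (N : ℕ) (IH : ∀ N' < N, ∀ (m n M : ℕ) (w : List Bool), invW w ≤ N' →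
    w.count true = m → w.count false = n → (M : ℤ) = n + minH w → HasExp m n M (wordElem w))
    (m n M : ℕ) (w w1 w2 : List Bool) (j : ℕ) (hN : invW w ≤ N)
    (hm1 : w1.count true = m) (hn1 : w1.count false = n)
    (hm2 : w2.count true = m) (hn2 : w2.count false = n)
    (hM : (M : ℤ) = n + minH w) (i1 : invW w1 < invW w) (i2 : invW w2 < invW w)
    (h1 : minH w1 = minH w) (h2 : minH w2 = minH w - 1)
    (hrel : wordElem w = qint (j + 1) • wordElem w1 - (qq * qint j) • wordElem w2) :
    HasExp m n M (wordElem w) := by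
  have h3 := neg_count_le w2
  obtain ⟨M, rfl⟩ : ∃ M', M = M' + 1 := ⟨M - 1, by omega⟩
  exact HasExp.combine (IH _ (by omega) m n (M + 1) w1 le_rfl hm1 hn1 (by omega))
    (IH _ (by omega) m n M w2 le_rfl hm2 hn2 (by push_cast at hM; omega)) hrel

lemma main_exp (N : ℕ) : ∀ (m n M : ℕ) (w : List Bool), invW w ≤ N → w.count true = m →
    w.count false = n → (M : ℤ) = n + minH w → HasExp m n M (wordElem w) := by
  induction N using Nat.strong_induction_on with
  | _ N IH =>
  intro m n M w hN hm hn hM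
  obtain ⟨x, y, hw, hx, hy⟩ := split_min w
  have hmin : minH w = ht x := by rw [hw, minH_append, hx, hy]; simp
  rcases right_part _ y le_rfl hy with ⟨b, c, hyb⟩ | ⟨b, i, z, hyb⟩
  · rcases left_part _ x le_rfl hx with ⟨a, b', hxb⟩ | ⟨b', i, z, hxb⟩
    · skip
      have hst : ∀ b, (stair b).count true = b ∧ (stair b).count false = b := by
        intro b
        induction b with
        | zero => simp [stair]
        | succ b ih => simp [stair_succ, ih]
      have h1 : m = b' + b + c := by
        rw [← hm, hw, hxb, hyb]; simp [hst, List.count_replicate, add_assoc]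
      have h2 : n = a + (b' + b) := by
        rw [← hn, hw, hxb, hyb]; simp [hst, List.count_replicate, add_assoc]
      have h3 : M = b' + b := by
        have : ht x = -a := by rw [hxb, ht_append, ht_stair, ht_rep_false]; ring
        omega
      have h4 : w = deltaWord m n M := by
        have e1 : n - M = a := by omega
        have e2 : m - M = c := by omega
        rw [deltaWord, e1, e2, h3]
        change w = List.replicate a false ++ stair (b' + b) ++ _
        rw [stair_add, hw, hxb, hyb]; simp
      refine ⟨fun k => if k = M then 1 else 0, fun k hk => if_neg (by omega), ?_⟩
      rw [Finset.sum_eq_single M]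
      · rw [← h4]; simp [evq, ← two_mul]
      · intro k _ hk; simp [hk, evq]
      · intro h; simp at h; omega
    · skip
      have hw' : w = z ++ ([true] ++ List.replicate (i + 1 + 1) false) ++ (stair b' ++ y) := by
        rw [hw, hxb]; simp
      have hh : ht x = ht z - i - 1 := by
        rw [hxb]; simp only [ht_append, ht_stair, ht_rep_false]; simp [ht]; ring
      have hz := ((le_minH_iff z (minH z)).1 le_rfl).1
      have hzge : ht z - i - 1 ≤ minH z := by
        rw [← hh, ← hx, hxb, List.append_assoc, minH_append]; exact min_le_left _ _
      have hrest : minH (stair b' ++ y) = 0 := by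
        rw [minH_append, minH_stair, ht_stair, hy]; simp
      have hrel := word_rel_en z (stair b' ++ y) (i + 1)
      rw [← hw'] at hrel
      generalize stair b' ++ y = Y at *
      refine step_exp N IH m n M w _ _ (i + 1) hN ?_ ?_ ?_ ?_ hM ?_ ?_ ?_ ?_ hrel
      · rw [← hm, hw']; simp [List.count_replicate]
      · rw [← hn, hw']; simp [List.count_replicate]; try omega
      · rw [← hm, hw']; simp [List.count_replicate]
      · rw [← hn, hw']; simp [List.count_replicate]
      · rw [hw']; simp [invW_append, invW_rep, invW_one, List.count_replicate, invW]; try ring_nf; try omega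
      · rw [hw']; simp [invW_append, invW_rep, invW_one, List.count_replicate, invW]; try ring_nf; try omega
      · rw [hmin, hh]
        simp only [minH_append, ht_append, ht_rep_false, minH_rep_false, hrest, ht_true, ht_false,
          minH_true, minH_false]
        push_cast
        omega
      · rw [hmin, hh]
        simp only [minH_append, ht_append, ht_rep_false, minH_rep_false, hrest, ht_true, ht_false,
          minH_true, minH_false]
        push_cast
        omega
  · skip
    have hw' : w = (x ++ stair b) ++ (List.replicate (i + 1 + 1) true ++ [false]) ++ z := by
      rw [hw, hyb]; simp
    have hX : ht (x ++ stair b) = ht x := by rw [ht_append, ht_stair]; simp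
    have hX2 : minH (x ++ stair b) = ht x := by rw [minH_append, minH_stair, hx]; simp
    have hz0 := minH_nonpos z
    have hz : -(i : ℤ) - 1 ≤ minH z := by
      rw [hw', minH_append, ht_append, hX, ht_append, ht_rep_true, ht_false] at hmin
      push_cast at hmin
      omega
    have hrel := word_rel_ne (x ++ stair b) z (i + 1)
    rw [← hw'] at hrel
    generalize x ++ stair b = X at *
    refine step_exp N IH m n M w _ _ (i + 1) hN ?_ ?_ ?_ ?_ hM ?_ ?_ ?_ ?_ hrel
    · rw [← hm, hw']; simp [List.count_replicate]; try omega
    · rw [← hn, hw']; simp [List.count_replicate]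
    · rw [← hm, hw']; simp [List.count_replicate]
    · rw [← hn, hw']; simp [List.count_replicate]
    · rw [hw']; simp [invW_append, invW_rep, invW_one, List.count_replicate, invW]; try ring_nf; try omega
    · rw [hw']; simp [invW_append, invW_rep, invW_one, List.count_replicate, invW]; try ring_nf; try omega
    · rw [hmin]
      simp only [minH_append, ht_append, ht_rep_true, minH_rep_true, ht_true, ht_false,
        minH_true, minH_false, hX, hX2]
      push_cast
      omega
    · rw [hmin]
      simp only [minH_append, ht_append, ht_rep_true, minH_rep_true, ht_true, ht_false,
        minH_true, minH_false, hX, hX2]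
      push_cast
      omega

/-! ### A representation, and linear independence -/

/-- The weight `1 - q^i`. -/
noncomputable def gg (i : ℤ) : F := 1 - qq ^ i

/-- Action of `𝗇`. -/
noncomputable def opN : Module.End F (ℤ → F) where
  toFun f := fun i => f (i + 1)
  map_add' _ _ := rfl
  map_smul' _ _ := rfl

/-- Action of `𝖾`. -/
noncomputable def opE : Module.End F (ℤ → F) where
  toFun f := fun i => gg i * f (i - 1)
  map_add' f g := by ext i; simp [mul_add]
  map_smul' c f := by ext i; simp; ring

lemma qq_ne : qq ≠ 0 := RatFunc.X_ne_zero

lemma gg_rec (i : ℤ) : (1 + qq) * gg i = qq * gg (i - 1) + gg (i + 1) := by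
  have := qq_ne
  simp only [gg, zpow_sub_one₀ this, zpow_add_one₀ this]
  field_simp
  ring

/-- The representation. -/
noncomputable def rep : PathAlg →ₐ[F] Module.End F (ℤ → F) :=
  RingQuot.liftAlgHom F ⟨FreeAlgebra.lift F (fun b => if b then opN else opE), by
    intro x y h
    rcases h with _ | _
    · ext f i
      simp [opN, opE]
      linear_combination (gg i * f (i - 1)) * gg_rec i
    · ext f i
      simp [opN, opE]
      have := gg_rec (i + 1)
      simp at this
      linear_combination (f (i + 1)) * this⟩

lemma rep_n (f : ℤ → F) (i : ℤ) : rep Pn f i = f (i + 1) := by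
  simp [rep, Pn, opN]

lemma rep_e (f : ℤ → F) (i : ℤ) : rep Pe f i = gg i * f (i - 1) := by
  simp [rep, Pe, opE]

lemma rep_npow (a : ℕ) (i : ℤ) : rep (Pn ^ a) 1 i = 1 := by
  induction a generalizing i with
  | zero => simp
  | succ a ih => rw [pow_succ', map_mul, Module.End.mul_apply, rep_n, ih]

lemma rep_stair (b : ℕ) (f : ℤ → F) (i : ℤ) :
    rep (wordElem (stair b)) f i = gg (i + 1) ^ b * f i := by
  induction b generalizing i with
  | zero => simp [stair, wordElem]
  | succ b ih =>
    have : wordElem (stair (b + 1)) = Pn * (Pe * wordElem (stair b)) := by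
      simp [stair_succ, wordElem]
    rw [this, map_mul, map_mul, Module.End.mul_apply, Module.End.mul_apply, rep_n, rep_e, ih]
    simp [pow_succ]; ring

lemma rep_epow (a : ℕ) (f : ℤ → F) (i : ℤ) :
    rep (Pe ^ a) f i = (∏ j ∈ Finset.range a, gg (i - j)) * f (i - a) := by
  induction a generalizing i with
  | zero => simp
  | succ a ih =>
    rw [pow_succ', map_mul, Module.End.mul_apply, rep_e, ih, Finset.prod_range_succ']
    have h1 : i - 1 - (a : ℤ) = i - ((a + 1 : ℕ) : ℤ) := by push_cast; ring
    have h2 : ∀ j : ℕ, i - 1 - (j : ℤ) = i - ((j + 1 : ℕ) : ℤ) := by intro j; push_cast; ring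
    simp only [h1, h2]
    simp; ring

lemma rep_delta (m n k : ℕ) (i : ℤ) : rep (wordElem (deltaWord m n k)) 1 i =
    (∏ j ∈ Finset.range (n - k), gg (i - j)) * gg (i - (n - k : ℕ) + 1) ^ k := by
  change rep (wordElem (List.replicate (n - k) false ++ stair k
    ++ List.replicate (m - k) true)) 1 i = _
  rw [wordElem_append, wordElem_append, wordElem_rep_false, wordElem_rep_true, map_mul, map_mul,
    Module.End.mul_apply, Module.End.mul_apply, rep_epow, rep_stair, rep_npow]
  simp

lemma gg_zero : gg 0 = 0 := by simp [gg]

lemma gg_ne (i : ℤ) (h : 0 < i) : gg i ≠ 0 := by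
  intro h0
  obtain ⟨a, rfl⟩ : ∃ a : ℕ, i = a := ⟨i.toNat, by omega⟩
  have h1 : qq ^ a = 1 := by
    simp only [gg, zpow_natCast, sub_eq_zero] at h0
    exact h0.symm
  have h2 : (Polynomial.X ^ a : Polynomial ℂ) = 1 := by
    apply RatFunc.algebraMap_injective ℂ
    simpa [qq] using h1
  have h3 := congrArg Polynomial.natDegree h2
  simp at h3
  omega

lemma rep_delta_zero (m n k k0 : ℕ) (hk : k < k0) (h0 : k0 ≤ n) :
    rep (wordElem (deltaWord m n k)) 1 ((n : ℤ) - k0) = 0 := by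
  rw [rep_delta, Finset.prod_eq_zero (i := n - k0), zero_mul]
  · simp; omega
  · have : (n : ℤ) - k0 - ((n - k0 : ℕ) : ℤ) = 0 := by omega
    rw [this, gg_zero]

lemma rep_delta_ne (m n k : ℕ) (h0 : k ≤ n) :
    rep (wordElem (deltaWord m n k)) 1 ((n : ℤ) - k) ≠ 0 := by
  rw [rep_delta]
  apply mul_ne_zero
  · rw [Finset.prod_ne_zero_iff]
    intro j hj
    have := Finset.mem_range.1 hj
    exact gg_ne _ (by omega)
  · exact pow_ne_zero _ (gg_ne _ (by omega))

lemma lin_indep (m n K : ℕ) (hK : K ≤ n + 1) : ∀ a : ℕ → F,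
    ∑ k ∈ Finset.range K, a k • wordElem (deltaWord m n k) = 0 → ∀ k < K, a k = 0 := by
  induction K with
  | zero => intro a _ k hk; omega
  | succ K ih =>
    intro a h
    have hK0 : a K = 0 := by
      have h1 := congrArg (fun x => rep x 1 ((n : ℤ) - K)) h
      simp only [map_sum, map_smul, map_zero, LinearMap.sum_apply, LinearMap.smul_apply,
        Finset.sum_apply, Pi.smul_apply, LinearMap.zero_apply, Pi.zero_apply] at h1
      rw [Finset.sum_range_succ, Finset.sum_eq_zero, zero_add] at h1
      · exact (smul_eq_zero.1 h1).resolve_right (rep_delta_ne m n K (by omega))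
      · intro k hk
        rw [rep_delta_zero m n k K (Finset.mem_range.1 hk) (by omega), smul_zero]
    rw [Finset.sum_range_succ, hK0, zero_smul, add_zero] at h
    intro k hk
    rcases Nat.lt_succ_iff_lt_or_eq.1 hk with h' | rfl
    · exact ih (by omega) a h k h'
    · exact hK0

/-- Expansion in the staircase basis; conjecture of
Colmenarejo–Morales–Panova. -/
theorem stmt2 (m n : ℕ) (w : List Bool) (hn : w.count true = m) (he : w.count false = n) :
    ∃ c : ℕ → Polynomial ℕ,
      (wordElem w = ∑ k ∈ Finset.range (mw m n w + 1),
        (((-1 : F) ^ (mw m n w - k)) * Polynomial.eval₂ (Nat.castRingHom F) qq (c k)) •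
          wordElem (deltaWord m n k)) ∧
      ∀ d : ℕ → F,
        wordElem w = ∑ k ∈ Finset.range (min m n + 1), d k • wordElem (deltaWord m n k) →
        ∀ k, mw m n w < k → k ≤ min m n → d k = 0 := by
  obtain ⟨c, hc, hw⟩ := main_exp (invW w) m n (mw m n w) w le_rfl hn he (mw_eq m n w hn he)
  have hM := mw_eq m n w hn he
  have h0 := minH_nonpos w
  have h1 := ((le_minH_iff w (minH w)).1 le_rfl).1
  have hht : ht w = (m : ℤ) - n := by simp [ht, hn, he]
  have hMm : mw m n w ≤ min m n := by omega
  generalize mw m n w = M at *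
  have hfirst : wordElem w = ∑ k ∈ Finset.range (M + 1),
        (((-1 : F) ^ (M - k)) * Polynomial.eval₂ (Nat.castRingHom F) qq (c k)) •
          wordElem (deltaWord m n k) := by
    rw [hw]
    symm
    apply Finset.sum_subset_zero_on_sdiff
    · intro k hk; simp at hk ⊢; omega
    · intro k hk
      simp at hk
      simp [hc k (by omega), evq]
    · intro k hk
      simp at hk
      have : (-1 : F) ^ (M + k) = (-1) ^ (M - k) := by
        have : M + k = M - k + 2 * k := by omega
        rw [this, pow_add, pow_mul]; simp
      rw [this]; rfl
  refine ⟨c, hfirst, ?_⟩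
  intro d hd k hk hkm
  have hz : ∑ k ∈ Finset.range (min m n + 1),
      (d k - if k ≤ M then (((-1 : F) ^ (M - k)) *
        Polynomial.eval₂ (Nat.castRingHom F) qq (c k)) else 0) •
          wordElem (deltaWord m n k) = 0 := by
    refine (Finset.sum_congr rfl (fun k _ => sub_smul (R := F) (M := PathAlg) (d k) _ _)).trans ?_
    rw [Finset.sum_sub_distrib]
    rw [← hd, hfirst, sub_eq_zero]
    apply Finset.sum_subset_zero_on_sdiff
    · intro k hk; simp at hk ⊢; omega
    · intro k hk
      simp at hk
      rw [if_neg (by omega), zero_smul]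
    · intro k hk
      simp at hk
      rw [if_pos (by omega)]
  have := lin_indep m n (min m n + 1) (by omega) _ hz k (by omega)
  rwa [if_neg (by omega), sub_zero] at this
end

section
/- Let D be a Dyck word of size n whose Dyck graph G = G(D) is abelian. Then for every number of colors ν ≥ 1 one has the identity in ℂ(q)[x_1,…,x_ν]: X_G(x_1,…,x_ν;q) = Σ_A q^{asc(A)} · e_{n−initial(A)}(x_1,…,x_ν) · e_{initial(A)}(x_1,…,x_ν), where the sum is over all acyclic orientations A of G and e_k denotes the k-th elementary symmetric polynomial. -/
noncomputable section

namespace AbelianProof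

open scoped Classical

open Finset

variable {N : ℕ}

/-- weight of ascending edges from `S` to `T`. -/
def wgt (adj : Fin N → Fin N → Prop) (S T : Finset (Fin N)) : ℕ :=
  ((S ×ˢ T).filter fun p => p.1 < p.2 ∧ adj p.1 p.2).card

/-- independent set -/
def Stab (adj : Fin N → Fin N → Prop) (S : Finset (Fin N)) : Prop :=
  ∀ a ∈ S, ∀ b ∈ S, ¬ adj a b

/-- induced adjacency -/
def radj (adj : Fin N → Fin N → Prop) (V : Finset (Fin N)) (a b : Fin N) : Prop :=
  adj a b ∧ a ∈ V ∧ b ∈ V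

/-- acyclic orientations of the induced graph on `V` -/
def AO (adj : Fin N → Fin N → Prop) (V : Finset (Fin N)) :
    Finset (Fin N → Fin N → Bool) :=
  Finset.univ.filter fun r => IsAcyclicOrientation N (radj adj V) r

/-- the first `k` source sets have size two -/
def Lead (r : Fin N → Fin N → Bool) (V : Set (Fin N)) (k : ℕ) : Prop :=
  ∀ j < k, numSources N r ((peel N r)^[j] V) = 2

/-- the sources as a finset -/
def src (r : Fin N → Fin N → Bool) (V : Finset (Fin N)) : Finset (Fin N) :=
  V.filter fun v => ∀ u ∈ V, ¬ r u v = true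

/-- restriction to complement of `S` -/
def res (S : Finset (Fin N)) (r : Fin N → Fin N → Bool) : Fin N → Fin N → Bool :=
  fun a b => r a b && decide (a ∉ S) && decide (b ∉ S)

/-- adding the sources `S` -/
def ext' (adj : Fin N → Fin N → Prop) (S V : Finset (Fin N))
    (r : Fin N → Fin N → Bool) : Fin N → Fin N → Bool :=
  fun a b => r a b || decide (a ∈ S ∧ b ∈ V \ S ∧ adj a b)

/-- the graph hypotheses -/
structure Good (adj : Fin N → Fin N → Prop) : Prop where
  symm : ∀ a b, adj a b → adj b a
  irr : ∀ a, ¬ adj a a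
  left : ∀ a b c, a < b → b < c → adj a c → adj a b
  right : ∀ a b c, a < b → b < c → adj a c → adj b c
  three : ∀ a b c, a < b → b < c → adj a b ∨ adj b c ∨ adj a c

theorem numSources_coe (r : Fin N → Fin N → Bool) (V : Finset (Fin N)) :
    numSources N r (V : Set (Fin N)) = (src r V).card := by
  rw [numSources, ← Set.ncard_coe_finset]
  congr 1
  ext v
  simp [src]

theorem Lead_succ (r : Fin N → Fin N → Bool) (V : Set (Fin N)) (k : ℕ) :
    Lead r V (k + 1) ↔ numSources N r V = 2 ∧ Lead r (peel N r V) k := by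
  constructor
  · intro h
    refine ⟨h 0 (by omega), fun j hj => ?_⟩
    have := h (j + 1) (by omega)
    simpa [Function.iterate_succ_apply] using this
  · rintro ⟨h0, h⟩ j hj
    cases j with
    | zero => exact h0
    | succ j =>
      have := h j (by omega)
      simpa [Function.iterate_succ_apply] using this

theorem peel_subset (r : Fin N → Fin N → Bool) (V : Set (Fin N)) : peel N r V ⊆ V :=
  fun _ h => h.1

theorem Lead_congr (r r' : Fin N → Fin N → Bool) (k : ℕ) :
    ∀ (V : Set (Fin N)), (∀ a ∈ V, ∀ b ∈ V, r a b = r' a b) → (Lead r V k ↔ Lead r' V k) := by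
  induction k with
  | zero => intro V _; simp [Lead]
  | succ k ih =>
    intro V h
    rw [Lead_succ, Lead_succ]
    have h1 : peel N r V = peel N r' V := by
      ext v
      constructor
      · rintro ⟨hv, u, hu, hr⟩
        exact ⟨hv, u, hu, by rw [← h u hu v hv]; exact hr⟩
      · rintro ⟨hv, u, hu, hr⟩
        exact ⟨hv, u, hu, by rw [h u hu v hv]; exact hr⟩
    have h2 : numSources N r V = numSources N r' V := by
      unfold numSources
      congr 1
      ext v
      constructor
      · rintro ⟨hv, hr⟩
        exact ⟨hv, fun u hu => by rw [← h u hu v hv]; exact hr u hu⟩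
      · rintro ⟨hv, hr⟩
        exact ⟨hv, fun u hu => by rw [h u hu v hv]; exact hr u hu⟩
    rw [h1, h2, ih]
    intro a ha b hb
    exact h a (peel_subset _ _ ha) b (peel_subset _ _ hb)

theorem peel_coe (r : Fin N → Fin N → Bool) (V : Finset (Fin N)) :
    peel N r (V : Set (Fin N)) = ((V \ src r V : Finset (Fin N)) : Set (Fin N)) := by
  ext v
  simp only [peel, src, Set.mem_ofPred_eq, Finset.mem_coe, Finset.mem_sdiff, Finset.mem_filter]
  constructor
  · rintro ⟨hv, u, hu, h⟩
    exact ⟨hv, fun h' => h'.2 u hu h⟩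
  · rintro ⟨hv, h⟩
    refine ⟨hv, ?_⟩
    by_contra hc
    push Not at hc
    exact h ⟨hv, hc⟩

section

variable {adj : Fin N → Fin N → Prop}

theorem res_mem (S V : Finset (Fin N)) (r) (hr : r ∈ AO adj V) :
    res S r ∈ AO adj (V \ S) := by
  simp only [AO, Finset.mem_filter, Finset.mem_univ, true_and] at hr ⊢
  obtain ⟨h1, h2, h3⟩ := hr
  refine ⟨?_, ?_, ?_⟩
  · intro a b h
    simp only [res, Bool.and_eq_true, decide_eq_true_eq] at h
    have := h1 a b h.1.1
    simp only [radj, Finset.mem_sdiff] at this ⊢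
    tauto
  · intro a b h
    simp only [radj, Finset.mem_sdiff] at h
    have := h2 a b ⟨h.1, h.2.1.1, h.2.2.1⟩
    simp only [res, Bool.and_eq_true, decide_eq_true_eq]
    tauto
  · intro a h
    refine h3 a (Relation.TransGen.mono ?_ a a h)
    intro u v huv
    simp only [res, Bool.and_eq_true, decide_eq_true_eq] at huv
    exact huv.1.1

theorem ext_mem (hg : Good adj) (S V : Finset (Fin N)) (hSV : S ⊆ V) (hS : Stab adj S)
    (r) (hr : r ∈ AO adj (V \ S)) :
    ext' adj S V r ∈ AO adj V := by
  simp only [AO, Finset.mem_filter, Finset.mem_univ, true_and] at hr ⊢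
  obtain ⟨h1, h2, h3⟩ := hr
  have hin : ∀ a b, ext' adj S V r a b = true → b ∉ S := by
    intro a b h hb
    simp only [ext', Bool.or_eq_true, decide_eq_true_eq] at h
    rcases h with h | h
    · have := (h1 a b h).2.2
      simp [hb] at this
    · simp [hb] at h
  refine ⟨?_, ?_, ?_⟩
  · intro a b h
    simp only [ext', Bool.or_eq_true, decide_eq_true_eq] at h
    rcases h with h | ⟨h, h', h''⟩
    · have := h1 a b h
      simp only [radj, Finset.mem_sdiff] at this ⊢
      tauto
    · exact ⟨h'', hSV h, (Finset.mem_sdiff.1 h').1⟩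
  · rintro a b ⟨hab, ha, hb⟩
    have hba := hg.symm _ _ hab
    have e1 := h1 a b
    have e2 := h1 b a
    have e3 := h2 a b
    simp only [ext', Bool.or_eq_true, decide_eq_true_eq, Finset.mem_sdiff]
    by_cases haS : a ∈ S
    · have hbS : b ∉ S := fun hbS => hS a haS b hbS hab
      have n1 : ¬ r b a = true := fun h => (Finset.mem_sdiff.1 (e2 h).2.2).2 haS
      simp [haS, hbS, hb, hab, n1]
    · by_cases hbS : b ∈ S
      · have n1 : ¬ r a b = true := fun h => (Finset.mem_sdiff.1 (e1 h).2.2).2 hbS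
        simp [haS, hbS, ha, hba, n1]
      · have := e3 ⟨hab, Finset.mem_sdiff.2 ⟨ha, haS⟩, Finset.mem_sdiff.2 ⟨hb, hbS⟩⟩
        simpa [haS, hbS] using this
  · intro a h
    by_cases ha : a ∈ S
    · rcases Relation.TransGen.tail'_iff.1 h with ⟨c, _, hc⟩
      exact hin _ _ hc ha
    · have key : ∀ b, Relation.TransGen (fun u v => ext' adj S V r u v = true) a b →
          Relation.TransGen (fun u v => r u v = true) a b ∧ b ∉ S := by
        intro b hb
        induction hb with
        | single hab =>
          refine ⟨Relation.TransGen.single ?_, hin _ _ hab⟩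
          simpa [ext', ha] using hab
        | tail _ hbc ih =>
          refine ⟨ih.1.tail ?_, hin _ _ hbc⟩
          simpa [ext', ih.2] using hbc
      exact h3 a (key a h).1

theorem res_ext (S V : Finset (Fin N)) (r) (hr : r ∈ AO adj (V \ S)) :
    res S (ext' adj S V r) = r := by
  simp only [AO, Finset.mem_filter, Finset.mem_univ, true_and] at hr
  funext a b
  have := hr.1 a b
  simp only [radj, Finset.mem_sdiff] at this
  by_cases haS : a ∈ S <;> by_cases hbS : b ∈ S <;> by_cases h : r a b = true <;>
    simp_all [res, ext']

theorem ext_res (S V : Finset (Fin N)) (r) (hSV : S ⊆ V) (hr : r ∈ AO adj V)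
    (hs : S ⊆ src r V) : ext' adj S V (res S r) = r := by
  simp only [AO, Finset.mem_filter, Finset.mem_univ, true_and] at hr
  funext a b
  have e1 := hr.1 a b
  have e2 := hr.2.1 a b
  have e3 := hr.1 b a
  have e4 : ∀ v ∈ S, ∀ u ∈ V, ¬ r u v = true := fun v hv => (Finset.mem_filter.1 (hs hv)).2
  have e5 := e4 b
  have e6 := e4 a
  have e7 := @hSV a
  simp only [radj] at e1 e2 e3
  have e8 : r b a = true → b ∈ V := fun h => (e3 h).2.1
  rw [Bool.eq_iff_iff]
  simp only [res, ext', Bool.or_eq_true, decide_eq_true_eq, Bool.and_eq_true, Finset.mem_sdiff]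
  constructor
  · rintro (h | h)
    · exact h.1.1
    · refine (e2 ⟨h.2.2, e7 h.1, h.2.1.1⟩).2 ?_
      exact e6 h.1 b h.2.1.1
  · intro h
    have h' := e1 h
    have hb : b ∉ S := fun hb => e5 hb a h'.2.1 h
    by_cases ha : a ∈ S
    · right; exact ⟨ha, ⟨h'.2.2, hb⟩, h'.1⟩
    · left; exact ⟨⟨h, ha⟩, hb⟩

theorem src_ext (S V : Finset (Fin N)) (hSV : S ⊆ V) (r) (hr : r ∈ AO adj (V \ S)) :
    S ⊆ src (ext' adj S V r) V := by
  simp only [AO, Finset.mem_filter, Finset.mem_univ, true_and] at hr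
  intro v hv
  refine Finset.mem_filter.2 ⟨hSV hv, fun u hu h => ?_⟩
  simp only [ext', Bool.or_eq_true, decide_eq_true_eq, Finset.mem_sdiff] at h
  rcases h with h | h
  · have := (hr.1 u v h).2.2
    simp [hv] at this
  · exact h.2.1.2 hv

theorem asc_ext (S V : Finset (Fin N)) (r) (hr : r ∈ AO adj (V \ S)) :
    ascOrient N (ext' adj S V r) = wgt adj S (V \ S) + ascOrient N r := by
  simp only [AO, Finset.mem_filter, Finset.mem_univ, true_and] at hr
  unfold ascOrient wgt
  rw [← Set.ncard_coe_finset, ← Set.ncard_union_eq]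
  · congr 1
    ext ⟨a, b⟩
    simp only [ext', Bool.or_eq_true, decide_eq_true_eq, Set.mem_ofPred_eq, Set.mem_union,
      Finset.coe_filter, Finset.mem_product, Fin.lt_def]
    tauto
  · rw [Set.disjoint_left]
    rintro ⟨a, b⟩ h h'
    simp only [Finset.coe_filter, Finset.mem_product, Set.mem_ofPred_eq] at h h'
    have := (hr.1 a b h'.1).2.1
    simp [h.1.1] at this

theorem src_stab (V : Finset (Fin N)) (r) (hr : r ∈ AO adj V) : Stab adj (src r V) := by
  simp only [AO, Finset.mem_filter, Finset.mem_univ, true_and] at hr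
  intro a ha b hb hab
  simp only [src, Finset.mem_filter] at ha hb
  have h1 := hb.2 a ha.1
  have h2 := ha.2 b hb.1
  exact h1 ((hr.2.1 a b ⟨hab, ha.1, hb.1⟩).2 h2)

theorem sort3 {P : Fin N → Fin N → Fin N → Prop}
    (h1 : ∀ a b c, P a b c → P b a c) (h2 : ∀ a b c, P a b c → P a c b)
    (h : ∀ a b c, a < b → b < c → P a b c) (a b c : Fin N) (hab : a ≠ b) (hac : a ≠ c)
    (hbc : b ≠ c) : P a b c := by
  rcases lt_or_gt_of_ne hab with x | x <;> rcases lt_or_gt_of_ne hac with y | y <;>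
    rcases lt_or_gt_of_ne hbc with z | z
  · exact h _ _ _ x z
  · exact h2 _ _ _ (h _ _ _ y z)
  · exact absurd (x.trans z) (not_lt.2 y.le)
  · exact h2 _ _ _ (h1 _ _ _ (h _ _ _ y x))
  · exact h1 _ _ _ (h _ _ _ x y)
  · exact absurd (y.trans z) (not_lt.2 x.le)
  · exact h1 _ _ _ (h2 _ _ _ (h _ _ _ z y))
  · exact h2 _ _ _ (h1 _ _ _ (h2 _ _ _ (h _ _ _ z x)))

theorem stab_card (hg : Good adj) (S : Finset (Fin N)) (hS : Stab adj S) : S.card ≤ 2 := by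
  by_contra hc
  push Not at hc
  obtain ⟨a, b, c, ha, hb, hc, hab, hac, hbc⟩ := Finset.two_lt_card_iff.1 hc
  have := sort3 (P := fun a b c => a ∈ S → b ∈ S → c ∈ S → False)
    (fun a b c h x y z => h y x z) (fun a b c h x y z => h x z y) (by
      intro a b c hab hbc ha hb hc
      rcases hg.three a b c hab hbc with h | h | h
      · exact hS _ ha _ hb h
      · exact hS _ hb _ hc h
      · exact hS _ ha _ hc h) a b c hab hac hbc
  exact this ha hb hc

theorem src_nonempty (V : Finset (Fin N)) (hV : V.Nonempty) (r) (hr : r ∈ AO adj V) :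
    (src r V).Nonempty := by
  simp only [AO, Finset.mem_filter, Finset.mem_univ, true_and] at hr
  have hwf : WellFounded (Relation.TransGen (fun u v => r u v = true)) := by
    have : Std.Irrefl (Relation.TransGen (fun u v => r u v = true)) := ⟨hr.2.2⟩
    exact Finite.wellFounded_of_trans_of_irrefl _
  obtain ⟨m, hm, hmin⟩ := hwf.has_min (V : Set (Fin N)) hV
  exact ⟨m, Finset.mem_filter.2 ⟨hm, fun u hu h => hmin u hu (Relation.TransGen.single h)⟩⟩

end

section

variable {adj : Fin N → Fin N → Prop} {R : Type*} [CommRing R]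

theorem ao_sum (hg : Good adj) (S V : Finset (Fin N)) (hSV : S ⊆ V) (hS : Stab adj S)
    (f : (Fin N → Fin N → Bool) → R) :
    ∑ r ∈ (AO adj V).filter (fun r => S ⊆ src r V), f r =
      ∑ r ∈ AO adj (V \ S), f (ext' adj S V r) := by
  refine Finset.sum_nbij' (res S) (ext' adj S V) ?_ ?_ ?_ ?_ ?_
  · intro r hr
    exact res_mem S V r (Finset.mem_filter.1 hr).1
  · intro r hr
    exact Finset.mem_filter.2 ⟨ext_mem hg S V hSV hS r hr, src_ext S V hSV r hr⟩
  · intro r hr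
    exact ext_res S V r hSV (Finset.mem_filter.1 hr).1 (Finset.mem_filter.1 hr).2
  · intro r hr
    exact res_ext S V r hr
  · intro r hr
    rw [ext_res S V r hSV (Finset.mem_filter.1 hr).1 (Finset.mem_filter.1 hr).2]

/-- independent pairs -/
def prs (adj : Fin N → Fin N → Prop) (V : Finset (Fin N)) : Finset (Finset (Fin N)) :=
  (Finset.powersetCard 2 V).filter (Stab adj)

theorem mem_prs {V S : Finset (Fin N)} :
    S ∈ prs adj V ↔ S ⊆ V ∧ S.card = 2 ∧ Stab adj S := by
  simp [prs, Finset.mem_powersetCard, and_assoc]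

/-- weighted count of orientations with at least `k` leading twos -/
def MM (adj : Fin N → Fin N → Prop) (Q : R) (k : ℕ) (V : Finset (Fin N)) : R :=
  ∑ r ∈ AO adj V, if Lead r (V : Set (Fin N)) k then Q ^ ascOrient N r else 0

theorem MM_succ (hg : Good adj) (Q : R) (k : ℕ) (V : Finset (Fin N)) :
    MM adj Q (k + 1) V =
      ∑ S ∈ prs adj V, Q ^ wgt adj S (V \ S) * MM adj Q k (V \ S) := by
  have h1 : ∀ S ∈ prs adj V, Q ^ wgt adj S (V \ S) * MM adj Q k (V \ S) =
      ∑ r ∈ AO adj V, if S ⊆ src r V then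
        (if Lead r (V : Set (Fin N)) (k + 1) then Q ^ ascOrient N r else 0) else 0 := by
    intro S hS
    obtain ⟨hSV, hc, hst⟩ := mem_prs.1 hS
    rw [← Finset.sum_filter, ao_sum hg S V hSV hst, MM, Finset.mul_sum]
    refine Finset.sum_congr rfl fun r hr => ?_
    have hsrc : src (ext' adj S V r) V = S := by
      symm
      apply Finset.eq_of_subset_of_card_le (src_ext S V hSV r hr)
      rw [hc]
      exact stab_card hg _ (src_stab V _ (ext_mem hg S V hSV hst r hr))
    have hl : Lead (ext' adj S V r) (V : Set (Fin N)) (k + 1) ↔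
        Lead r ((V \ S : Finset (Fin N)) : Set (Fin N)) k := by
      rw [Lead_succ, numSources_coe, peel_coe, hsrc]
      simp only [hc, true_and]
      apply Lead_congr
      intro a ha b hb
      have : a ∉ S := (Finset.mem_sdiff.1 (Finset.mem_coe.1 ha)).2
      simp [ext', this]
    rw [asc_ext S V r hr, pow_add]
    simp only [hl]
    split_ifs <;> simp
  rw [Finset.sum_congr rfl h1, Finset.sum_comm, MM]
  refine Finset.sum_congr rfl fun r hr => ?_
  split_ifs with h
  · have hc : (src r V).card = 2 := by
      rw [← numSources_coe]; exact ((Lead_succ _ _ _).1 h).1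
    symm
    rw [Finset.sum_eq_single (src r V)]
    · simp
    · intro S hS hne
      rw [if_neg]
      intro hsub
      exact hne (Finset.eq_of_subset_of_card_le hsub (by rw [hc, (mem_prs.1 hS).2.1]))
    · intro hn
      exact absurd (mem_prs.2 ⟨Finset.filter_subset _ _, hc, src_stab V r hr⟩) hn
  · simp

theorem MM_zero_of_lt (hg : Good adj) (Q : R) (k : ℕ) :
    ∀ V : Finset (Fin N), V.card < 2 * k → MM adj Q k V = 0 := by
  induction k with
  | zero => intro V h; omega
  | succ k ih =>
    intro V h
    rw [MM_succ hg]
    refine Finset.sum_eq_zero fun S hS => ?_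
    obtain ⟨hSV, hc, _⟩ := mem_prs.1 hS
    rw [ih, mul_zero]
    rw [Finset.card_sdiff_of_subset hSV]
    have := Finset.card_le_card hSV
    omega

theorem MM_base (hg : Good adj) (Q : R) (V : Finset (Fin N)) (hV : V.Nonempty) :
    ∑ v ∈ V, Q ^ wgt adj {v} (V \ {v}) * MM adj Q 0 (V \ {v}) =
      MM adj Q 0 V + MM adj Q 1 V := by
  have h1 : ∀ v ∈ V, Q ^ wgt adj {v} (V \ {v}) * MM adj Q 0 (V \ {v}) =
      ∑ r ∈ AO adj V, if v ∈ src r V then Q ^ ascOrient N r else 0 := by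
    intro v hv
    have hSV : {v} ⊆ V := by simpa using hv
    have hst : Stab adj {v} := by
      intro a ha b hb
      rw [Finset.mem_singleton.1 ha, Finset.mem_singleton.1 hb]
      exact hg.irr v
    have := ao_sum hg {v} V hSV hst (fun r => Q ^ ascOrient N r)
    simp only [Finset.singleton_subset_iff] at this
    rw [← Finset.sum_filter, this, MM, Finset.mul_sum]
    refine Finset.sum_congr rfl fun r hr => ?_
    rw [asc_ext {v} V r hr, pow_add]
    simp [Lead]
  rw [Finset.sum_congr rfl h1, Finset.sum_comm, MM, MM, ← Finset.sum_add_distrib]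
  refine Finset.sum_congr rfl fun r hr => ?_
  have hsub : V.filter (fun v => v ∈ src r V) = src r V := by
    ext v; simp only [Finset.mem_filter]
    exact ⟨fun h => h.2, fun h => ⟨(Finset.mem_filter.1 h).1, h⟩⟩
  rw [← Finset.sum_filter, hsub, Finset.sum_const, Lead_succ, numSources_coe]
  have h2 := stab_card hg _ (src_stab V r hr)
  have h3 := (src_nonempty V hV r hr).card_pos
  have h4 : (src r V).card = 1 ∨ (src r V).card = 2 := by omega
  rcases h4 with h4 | h4
  · simp [h4, Lead]
  · simp [h4, Lead, two_mul]

theorem wgt_eq (S T : Finset (Fin N)) :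
    wgt adj S T = ∑ s ∈ S, ∑ t ∈ T, if s < t ∧ adj s t then 1 else 0 := by
  rw [wgt, Finset.card_filter, Finset.sum_product]

theorem wgt_union_left (S S' T : Finset (Fin N)) (h : Disjoint S S') :
    wgt adj (S ∪ S') T = wgt adj S T + wgt adj S' T := by
  simp only [wgt_eq, Finset.sum_union h]

theorem wgt_union_right (S T T' : Finset (Fin N)) (h : Disjoint T T') :
    wgt adj S (T ∪ T') = wgt adj S T + wgt adj S T' := by
  simp only [wgt_eq, Finset.sum_union h, Finset.sum_add_distrib]

theorem three_aux (hg : Good adj) (Q : R) (a b c : Fin N) (hab : a < b) (hbc : b < c) :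
    ∑ v ∈ ({a, b, c} : Finset (Fin N)),
      (if Stab adj (({a, b, c} : Finset (Fin N)) \ {v}) then
        Q ^ wgt adj {v} (({a, b, c} : Finset (Fin N)) \ {v}) else 0) =
    ∑ v ∈ ({a, b, c} : Finset (Fin N)),
      (if Stab adj (({a, b, c} : Finset (Fin N)) \ {v}) then
        Q ^ wgt adj (({a, b, c} : Finset (Fin N)) \ {v}) {v} else 0) := by
  have hac := hab.trans hbc
  have s1 : ({a, b, c} : Finset (Fin N)) \ {a} = {b, c} := by
    ext x; simp only [Finset.mem_sdiff, Finset.mem_insert, Finset.mem_singleton]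
    have := hab.ne'; have := hac.ne'
    constructor
    · tauto
    · rintro (rfl | rfl) <;> tauto
  have s2 : ({a, b, c} : Finset (Fin N)) \ {b} = {a, c} := by
    ext x; simp only [Finset.mem_sdiff, Finset.mem_insert, Finset.mem_singleton]
    have := hab.ne; have := hbc.ne'
    constructor
    · tauto
    · rintro (rfl | rfl) <;> tauto
  have s3 : ({a, b, c} : Finset (Fin N)) \ {c} = {a, b} := by
    ext x; simp only [Finset.mem_sdiff, Finset.mem_insert, Finset.mem_singleton]
    have := hac.ne; have := hbc.ne
    constructor
    · tauto
    · rintro (rfl | rfl) <;> tauto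
  have st : ∀ x y, Stab adj {x, y} ↔ ¬ adj x y := by
    intro x y
    have i1 := hg.irr x
    have i2 := hg.irr y
    have i3 := hg.symm y x
    simp only [Stab, Finset.mem_insert, Finset.mem_singleton, forall_eq_or_imp, forall_eq]
    tauto
  have na : a ∉ ({b, c} : Finset (Fin N)) := by simp [hab.ne, hac.ne]
  have nb : b ∉ ({c} : Finset (Fin N)) := by simp [hbc.ne]
  rw [Finset.sum_insert na, Finset.sum_insert nb, Finset.sum_singleton,
    Finset.sum_insert na, Finset.sum_insert nb, Finset.sum_singleton, s1, s2, s3]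
  simp only [st, wgt_eq, Finset.sum_singleton, Finset.sum_pair hab.ne, Finset.sum_pair hac.ne,
    Finset.sum_pair hbc.ne, hab, hac, hbc, hab.not_gt, hac.not_gt, hbc.not_gt, true_and,
    false_and, if_false]
  have l := hg.left a b c hab hbc
  have r := hg.right a b c hab hbc
  have t := hg.three a b c hab hbc
  by_cases x : adj a b <;> by_cases y : adj b c <;> by_cases z : adj a c <;>
    simp [x, y, z] at l r t ⊢
  all_goals ring

theorem three (hg : Good adj) (Q : R) (U : Finset (Fin N)) (hU : U.card = 3) :
    ∑ v ∈ U, (if Stab adj (U \ {v}) then Q ^ wgt adj {v} (U \ {v}) else 0) =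
    ∑ v ∈ U, (if Stab adj (U \ {v}) then Q ^ wgt adj (U \ {v}) {v} else 0) := by
  obtain ⟨a, b, c, hab, hac, hbc, rfl⟩ := Finset.card_eq_three.1 hU
  refine sort3 (P := fun a b c => ∑ v ∈ ({a, b, c} : Finset (Fin N)),
      (if Stab adj (({a, b, c} : Finset (Fin N)) \ {v}) then
        Q ^ wgt adj {v} (({a, b, c} : Finset (Fin N)) \ {v}) else 0) =
    ∑ v ∈ ({a, b, c} : Finset (Fin N)),
      (if Stab adj (({a, b, c} : Finset (Fin N)) \ {v}) then
        Q ^ wgt adj (({a, b, c} : Finset (Fin N)) \ {v}) {v} else 0)) ?_ ?_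
    (three_aux hg Q) a b c hab hac hbc
  · intro a b c h
    rw [Finset.insert_comm b a {c}]
    exact h
  · intro a b c h
    rw [Finset.pair_comm c b]
    exact h

theorem move_left (Q : R) (V : Finset (Fin N)) (f : Finset (Fin N) → R) :
    ∑ v ∈ V, Q ^ wgt adj {v} (V \ {v}) * ∑ S ∈ prs adj (V \ {v}),
      Q ^ wgt adj S ((V \ {v}) \ S) * f ((V \ {v}) \ S) =
    ∑ U ∈ Finset.powersetCard 3 V, Q ^ wgt adj U (V \ U) * f (V \ U) *
      ∑ v ∈ U, (if Stab adj (U \ {v}) then Q ^ wgt adj {v} (U \ {v}) else 0) := by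
  simp only [Finset.mul_sum, ← Finset.sum_filter]
  rw [Finset.sum_sigma', Finset.sum_sigma']
  refine Finset.sum_bij' (fun p _ => ⟨insert p.1 p.2, p.1⟩) (fun p _ => ⟨p.2, p.1 \ {p.2}⟩)
    ?_ ?_ ?_ ?_ ?_
  · rintro ⟨v, S⟩ h
    simp only [Finset.mem_sigma, mem_prs, Finset.mem_filter, Finset.mem_powersetCard] at h ⊢
    obtain ⟨hv, hS, hc, hst⟩ := h
    have hvS : v ∉ S := fun h' => by simpa using hS h'
    have e : insert v S \ {v} = S := by
      rw [Finset.sdiff_singleton_eq_erase, Finset.erase_insert hvS]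
    refine ⟨⟨?_, ?_⟩, Finset.mem_insert_self _ _, ?_⟩
    · exact Finset.insert_subset hv (hS.trans Finset.sdiff_subset)
    · rw [Finset.card_insert_of_notMem hvS, hc]
    · rw [e]; exact hst
  · rintro ⟨U, v⟩ h
    simp only [Finset.mem_sigma, mem_prs, Finset.mem_filter, Finset.mem_powersetCard] at h ⊢
    obtain ⟨⟨hU, hc⟩, hv, hst⟩ := h
    refine ⟨hU hv, Finset.sdiff_subset_sdiff hU subset_rfl, ?_, hst⟩
    rw [Finset.card_sdiff_of_subset (by simpa using hv), hc]; simp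
  · rintro ⟨v, S⟩ h
    simp only [Finset.mem_sigma, mem_prs] at h
    obtain ⟨hv, hS, hc, hst⟩ := h
    have hvS : v ∉ S := fun h' => by simpa using hS h'
    have e : insert v S \ {v} = S := by
      rw [Finset.sdiff_singleton_eq_erase, Finset.erase_insert hvS]
    simp only [e]
  · rintro ⟨U, v⟩ h
    simp only [Finset.mem_sigma, Finset.mem_filter, Finset.mem_powersetCard] at h
    obtain ⟨⟨hU, hc⟩, hv, hst⟩ := h
    have e : insert v (U \ {v}) = U := by
      rw [Finset.sdiff_singleton_eq_erase, Finset.insert_erase hv]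
    simp only [e]
  · rintro ⟨v, S⟩ h
    simp only [Finset.mem_sigma, mem_prs] at h
    obtain ⟨hv, hS, hc, hst⟩ := h
    have hvS : v ∉ S := fun h' => by simpa using hS h'
    have e : insert v S \ {v} = S := by
      rw [Finset.sdiff_singleton_eq_erase, Finset.erase_insert hvS]
    have e2 : (V \ {v}) \ S = V \ insert v S := by
      ext x; simp only [Finset.mem_sdiff, Finset.mem_insert, Finset.mem_singleton]; tauto
    have e3 : V \ {v} = S ∪ V \ insert v S := by
      rw [← e2, Finset.union_sdiff_of_subset hS]
    have d : Disjoint S (V \ insert v S) := by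
      rw [← e2]; exact Finset.disjoint_sdiff
    have e4 : insert v S = {v} ∪ S := rfl
    simp only [e]
    rw [e2]
    conv_lhs => rw [e3, wgt_union_right _ _ _ d]
    have e5 : wgt adj (insert v S) (V \ insert v S) =
        wgt adj {v} (V \ insert v S) + wgt adj S (V \ insert v S) := by
      conv_lhs => rw [e4]
      rw [wgt_union_left _ _ _ (by simpa using hvS)]
      rfl
    rw [e5]
    ring

theorem move_right (Q : R) (V : Finset (Fin N)) (f : Finset (Fin N) → R) :
    ∑ S ∈ prs adj V, Q ^ wgt adj S (V \ S) * ∑ v ∈ V \ S,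
      Q ^ wgt adj {v} ((V \ S) \ {v}) * f ((V \ S) \ {v}) =
    ∑ U ∈ Finset.powersetCard 3 V, Q ^ wgt adj U (V \ U) * f (V \ U) *
      ∑ v ∈ U, (if Stab adj (U \ {v}) then Q ^ wgt adj (U \ {v}) {v} else 0) := by
  simp only [Finset.mul_sum, ← Finset.sum_filter]
  rw [Finset.sum_sigma', Finset.sum_sigma']
  refine Finset.sum_bij' (fun p _ => ⟨insert p.2 p.1, p.2⟩) (fun p _ => ⟨p.1 \ {p.2}, p.2⟩)
    ?_ ?_ ?_ ?_ ?_
  · rintro ⟨S, v⟩ h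
    simp only [Finset.mem_sigma, mem_prs, Finset.mem_filter, Finset.mem_powersetCard,
      Finset.mem_sdiff] at h ⊢
    obtain ⟨⟨hS, hc, hst⟩, hv, hvS⟩ := h
    have e : insert v S \ {v} = S := by
      rw [Finset.sdiff_singleton_eq_erase, Finset.erase_insert hvS]
    refine ⟨⟨?_, ?_⟩, Finset.mem_insert_self _ _, ?_⟩
    · exact Finset.insert_subset hv hS
    · rw [Finset.card_insert_of_notMem hvS, hc]
    · rw [e]; exact hst
  · rintro ⟨U, v⟩ h
    simp only [Finset.mem_sigma, mem_prs, Finset.mem_filter, Finset.mem_powersetCard] at h ⊢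
    obtain ⟨⟨hU, hc⟩, hv, hst⟩ := h
    refine ⟨⟨Finset.sdiff_subset.trans hU, ?_, hst⟩, by simp [hU hv]⟩
    rw [Finset.card_sdiff_of_subset (by simpa using hv), hc]; simp
  · rintro ⟨S, v⟩ h
    simp only [Finset.mem_sigma, mem_prs, Finset.mem_sdiff] at h
    obtain ⟨⟨hS, hc, hst⟩, hv, hvS⟩ := h
    have e : insert v S \ {v} = S := by
      rw [Finset.sdiff_singleton_eq_erase, Finset.erase_insert hvS]
    simp only [e]
  · rintro ⟨U, v⟩ h
    simp only [Finset.mem_sigma, Finset.mem_filter, Finset.mem_powersetCard] at h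
    obtain ⟨⟨hU, hc⟩, hv, hst⟩ := h
    have e : insert v (U \ {v}) = U := by
      rw [Finset.sdiff_singleton_eq_erase, Finset.insert_erase hv]
    simp only [e]
  · rintro ⟨S, v⟩ h
    simp only [Finset.mem_sigma, mem_prs, Finset.mem_sdiff] at h
    obtain ⟨⟨hS, hc, hst⟩, hv, hvS⟩ := h
    have e : insert v S \ {v} = S := by
      rw [Finset.sdiff_singleton_eq_erase, Finset.erase_insert hvS]
    have e2 : (V \ S) \ {v} = V \ insert v S := by
      ext x; simp only [Finset.mem_sdiff, Finset.mem_insert, Finset.mem_singleton]; tauto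
    have e3 : V \ S = {v} ∪ V \ insert v S := by
      rw [← e2, Finset.union_sdiff_of_subset (by simp [hv, hvS])]
    have d : Disjoint {v} (V \ insert v S) := by
      rw [← e2]; exact Finset.disjoint_sdiff
    have e4 : insert v S = {v} ∪ S := rfl
    simp only [e]
    rw [e2]
    conv_lhs => rw [e3, wgt_union_right _ _ _ d]
    have e5 : wgt adj (insert v S) (V \ insert v S) =
        wgt adj {v} (V \ insert v S) + wgt adj S (V \ insert v S) := by
      conv_lhs => rw [e4]
      rw [wgt_union_left _ _ _ (by simpa using hvS)]
      rfl
    rw [e5]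
    ring

theorem MM_key (hg : Good adj) (Q : R) (k : ℕ) : ∀ V : Finset (Fin N), 2 * k < V.card →
    ∑ v ∈ V, Q ^ wgt adj {v} (V \ {v}) * MM adj Q k (V \ {v}) =
      MM adj Q k V + MM adj Q (k + 1) V := by
  induction k with
  | zero =>
    intro V hV
    exact MM_base hg Q V (Finset.card_pos.1 (by omega))
  | succ k ih =>
    intro V hV
    have e : ∀ v ∈ V, Q ^ wgt adj {v} (V \ {v}) * MM adj Q (k + 1) (V \ {v}) =
        Q ^ wgt adj {v} (V \ {v}) * ∑ S ∈ prs adj (V \ {v}),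
      Q ^ wgt adj S ((V \ {v}) \ S) * MM adj Q k ((V \ {v}) \ S) := fun v _ => by
      rw [MM_succ hg]
    rw [Finset.sum_congr rfl e, move_left]
    have e2 : ∀ U ∈ Finset.powersetCard 3 V, Q ^ wgt adj U (V \ U) * MM adj Q k (V \ U) *
      ∑ v ∈ U, (if Stab adj (U \ {v}) then Q ^ wgt adj {v} (U \ {v}) else 0) =
      Q ^ wgt adj U (V \ U) * MM adj Q k (V \ U) *
      ∑ v ∈ U, (if Stab adj (U \ {v}) then Q ^ wgt adj (U \ {v}) {v} else 0) := by
      intro U hU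
      rw [three hg Q U (Finset.mem_powersetCard.1 hU).2]
    rw [Finset.sum_congr rfl e2, ← move_right, MM_succ hg, MM_succ hg Q (k + 1),
      ← Finset.sum_add_distrib]
    refine Finset.sum_congr rfl fun S hS => ?_
    obtain ⟨hSV, hc, _⟩ := mem_prs.1 hS
    rw [ih, mul_add]
    rw [Finset.card_sdiff_of_subset hSV]
    omega

end

section

variable {adj : Fin N → Fin N → Prop} {R : Type*} [CommRing R] {ν : ℕ}

/-- properness on `V` -/
def Prp (adj : Fin N → Fin N → Prop) (V : Finset (Fin N)) (κ : Fin N → Fin ν) : Prop :=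
  ∀ a ∈ V, ∀ b ∈ V, adj a b → κ a ≠ κ b

/-- ascents in `V` -/
def ascV (adj : Fin N → Fin N → Prop) (V : Finset (Fin N)) (κ : Fin N → Fin ν) : ℕ :=
  ((V ×ˢ V).filter fun p => p.1 < p.2 ∧ adj p.1 p.2 ∧ κ p.1 < κ p.2).card

/-- colorings of `V` with colors in `s` -/
def Col (d : Fin ν) (V : Finset (Fin N)) (s : Finset (Fin ν)) : Finset (Fin N → Fin ν) :=
  Fintype.piFinset fun a => if a ∈ V then s else {d}

/-- one term -/
def term (adj : Fin N → Fin N → Prop) (Q : R) (x : Fin ν → R) (V : Finset (Fin N))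
    (κ : Fin N → Fin ν) : R :=
  if Prp adj V κ then Q ^ ascV adj V κ * ∏ a ∈ V, x (κ a) else 0

/-- chromatic sum on `V` -/
def XX (adj : Fin N → Fin N → Prop) (Q : R) (x : Fin ν → R) (d : Fin ν) (V : Finset (Fin N))
    (s : Finset (Fin ν)) : R :=
  ∑ κ ∈ Col d V s, term adj Q x V κ

theorem mem_Col {d : Fin ν} {V : Finset (Fin N)} {s : Finset (Fin ν)} {κ : Fin N → Fin ν} :
    κ ∈ Col d V s ↔ (∀ a ∈ V, κ a ∈ s) ∧ ∀ a, a ∉ V → κ a = d := by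
  simp only [Col, Fintype.mem_piFinset]
  constructor
  · intro h
    refine ⟨fun a ha => ?_, fun a ha => ?_⟩
    · simpa [ha] using h a
    · simpa [ha] using h a
  · rintro ⟨h1, h2⟩ a
    by_cases ha : a ∈ V
    · simpa [ha] using h1 a ha
    · simpa [ha] using h2 a ha

/-- glue color `c` on `S` -/
def glue (S : Finset (Fin N)) (c : Fin ν) (κ : Fin N → Fin ν) : Fin N → Fin ν :=
  fun a => if a ∈ S then c else κ a

theorem term_glue (Q : R) (x : Fin ν → R) (d : Fin ν) (S V : Finset (Fin N))
    (s : Finset (Fin ν)) (c : Fin ν) (hc : ∀ y ∈ s, c < y) (hSV : S ⊆ V) (hS : Stab adj S)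
    (κ : Fin N → Fin ν) (hκ : κ ∈ Col d (V \ S) s) :
    term adj Q x V (glue S c κ) =
      x c ^ S.card * (Q ^ wgt adj S (V \ S) * term adj Q x (V \ S) κ) := by
  have hlt : ∀ a ∈ V, a ∉ S → c < κ a := fun a ha haS =>
    hc _ ((mem_Col.1 hκ).1 a (Finset.mem_sdiff.2 ⟨ha, haS⟩))
  have h1 : Prp adj V (glue S c κ) ↔ Prp adj (V \ S) κ := by
    constructor
    · intro h a ha b hb hab
      rw [Finset.mem_sdiff] at ha hb
      have := h a ha.1 b hb.1 hab
      simpa [glue, ha.2, hb.2] using this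
    · intro h a ha b hb hab
      by_cases haS : a ∈ S <;> by_cases hbS : b ∈ S
      · exact absurd hab (hS a haS b hbS)
      · simpa [glue, haS, hbS] using (hlt b hb hbS).ne
      · simpa [glue, haS, hbS] using (hlt a ha haS).ne'
      · simpa [glue, haS, hbS] using
          h a (Finset.mem_sdiff.2 ⟨ha, haS⟩) b (Finset.mem_sdiff.2 ⟨hb, hbS⟩) hab
  have h2 : ascV adj V (glue S c κ) = wgt adj S (V \ S) + ascV adj (V \ S) κ := by
    unfold ascV wgt
    rw [← Finset.card_union_of_disjoint]
    · congr 1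
      ext ⟨a, b⟩
      simp only [Finset.mem_filter, Finset.mem_product, Finset.mem_union, Finset.mem_sdiff]
      have ea := @hSV a
      have la := hlt a
      have lb := hlt b
      by_cases haS : a ∈ S <;> by_cases hbS : b ∈ S
      · simp [glue, haS, hbS]
      · simp only [glue, haS, hbS, if_true, if_false]
        tauto
      · simp only [glue, haS, hbS, if_true, if_false]
        have : a ∈ V → ¬ κ a < c := fun h => (la h haS).not_gt
        tauto
      · simp only [glue, haS, hbS, if_false]
        tauto
    · rw [Finset.disjoint_left]
      rintro ⟨a, b⟩ h h'
      simp only [Finset.mem_filter, Finset.mem_product, Finset.mem_sdiff] at h h'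
      exact h'.1.1.2 h.1.1
  have h3 : ∏ a ∈ V, x (glue S c κ a) = x c ^ S.card * ∏ a ∈ V \ S, x (κ a) := by
    rw [← Finset.prod_sdiff hSV, mul_comm]
    congr 1
    · rw [← Finset.prod_const]
      refine Finset.prod_congr rfl fun a ha => ?_
      simp [glue, ha]
    · refine Finset.prod_congr rfl fun a ha => ?_
      simp [glue, (Finset.mem_sdiff.1 ha).2]
  unfold term
  simp only [h1]
  split_ifs
  · rw [h2, h3, pow_add]; ring
  · simp

theorem XX_insert (Q : R) (x : Fin ν → R) (d : Fin ν) (V : Finset (Fin N))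
    (s : Finset (Fin ν)) (c : Fin ν) (hc : ∀ y ∈ s, c < y) :
    XX adj Q x d V (insert c s) =
      ∑ S ∈ V.powerset.filter (Stab adj),
        x c ^ S.card * (Q ^ wgt adj S (V \ S) * XX adj Q x d (V \ S) s) := by
  unfold XX
  rw [← Finset.sum_fiberwise_of_maps_to (s := Col d V (insert c s)) (t := V.powerset)
    (g := fun κ => V.filter fun a => κ a = c)
    (fun κ _ => Finset.mem_powerset.2 (Finset.filter_subset _ _))]
  rw [Finset.sum_filter]
  refine Finset.sum_congr rfl fun S hS => ?_
  rw [Finset.mem_powerset] at hS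
  split_ifs with hst
  · rw [Finset.mul_sum, Finset.mul_sum]
    symm
    refine Finset.sum_nbij' (glue S c) (glue S d) ?_ ?_ ?_ ?_ ?_
    · intro κ hκ
      rw [Finset.mem_filter, mem_Col]
      have h := mem_Col.1 hκ
      refine ⟨⟨?_, ?_⟩, ?_⟩
      · intro a ha
        by_cases haS : a ∈ S
        · simp [glue, haS]
        · simpa [glue, haS] using Or.inr (h.1 a (Finset.mem_sdiff.2 ⟨ha, haS⟩))
      · intro a ha
        have haS : a ∉ S := fun h => ha (hS h)
        simpa [glue, haS] using h.2 a (by simp [ha])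
      · ext a
        rw [Finset.mem_filter]
        constructor
        · rintro ⟨ha, he⟩
          by_contra haS
          simp only [glue, haS, if_false] at he
          exact (hc _ (h.1 a (Finset.mem_sdiff.2 ⟨ha, haS⟩))).ne' he
        · intro haS
          exact ⟨hS haS, by simp [glue, haS]⟩
    · intro κ hκ
      rw [Finset.mem_filter, mem_Col] at hκ
      obtain ⟨⟨h1, h2⟩, h3⟩ := hκ
      rw [mem_Col]
      refine ⟨fun a ha => ?_, fun a ha => ?_⟩
      · rw [Finset.mem_sdiff] at ha
        have := Finset.mem_insert.1 (h1 a ha.1)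
        rcases this with h | h
        · exact absurd (h3 ▸ Finset.mem_filter.2 ⟨ha.1, h⟩) ha.2
        · simpa [glue, ha.2] using h
      · by_cases haS : a ∈ S
        · simp [glue, haS]
        · have : a ∉ V := fun h => ha (Finset.mem_sdiff.2 ⟨h, haS⟩)
          simpa [glue, haS] using h2 a this
    · intro κ hκ
      have h := mem_Col.1 hκ
      funext a
      by_cases haS : a ∈ S
      · simpa [glue, haS] using (h.2 a (by simp [haS])).symm
      · simp [glue, haS]
    · intro κ hκ
      rw [Finset.mem_filter] at hκ
      funext a
      by_cases haS : a ∈ S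
      · have h := haS
        rw [← hκ.2, Finset.mem_filter] at h
        simpa [glue, haS] using h.2.symm
      · simp [glue, haS]
    · intro κ hκ
      exact (term_glue Q x d S V s c hc hS hst κ hκ).symm
  · refine Finset.sum_eq_zero fun κ hκ => ?_
    rw [Finset.mem_filter] at hκ
    unfold term
    rw [if_neg]
    intro hp
    apply hst
    intro a ha b hb hab
    rw [← hκ.2, Finset.mem_filter] at ha hb
    exact hp a ha.1 b hb.1 hab (ha.2.trans hb.2.symm)

theorem sum_stab (hg : Good adj) (V : Finset (Fin N)) (g : Finset (Fin N) → R) :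
    ∑ S ∈ V.powerset.filter (Stab adj), g S =
      g ∅ + ∑ v ∈ V, g {v} + ∑ S ∈ prs adj V, g S := by
  rw [← Finset.sum_fiberwise_of_maps_to (s := V.powerset.filter (Stab adj)) (t := Finset.range 3)
    (g := Finset.card) (fun S hS => Finset.mem_range.2
      (Nat.lt_succ_of_le (stab_card hg S (Finset.mem_filter.1 hS).2)))]
  rw [Finset.sum_range_succ, Finset.sum_range_succ, Finset.sum_range_one]
  congr 1
  · congr 1
    · rw [show (V.powerset.filter (Stab adj)).filter (fun S => S.card = 0) = {∅} from ?_]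
      · simp
      · ext S
        simp only [Finset.mem_filter, Finset.mem_powerset, Finset.card_eq_zero,
          Finset.mem_singleton]
        constructor
        · exact fun h => h.2
        · rintro rfl
          exact ⟨⟨Finset.empty_subset _, fun a ha => by simp at ha⟩, rfl⟩
    · rw [show (V.powerset.filter (Stab adj)).filter (fun S => S.card = 1) =
        Finset.powersetCard 1 V from ?_, Finset.powersetCard_one, Finset.sum_map]
      · rfl
      · ext S
        simp only [Finset.mem_filter, Finset.mem_powerset, Finset.mem_powersetCard]
        constructor
        · exact fun h => ⟨h.1.1, h.2⟩
        · rintro ⟨h1, h2⟩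
          refine ⟨⟨h1, ?_⟩, h2⟩
          obtain ⟨v, rfl⟩ := Finset.card_eq_one.1 h2
          intro a ha b hb
          rw [Finset.mem_singleton.1 ha, Finset.mem_singleton.1 hb]
          exact hg.irr v
  · refine Finset.sum_congr ?_ fun _ _ => rfl
    ext S
    simp only [Finset.mem_filter, Finset.mem_powerset, mem_prs]
    tauto

/-- elementary symmetric sum, integer index -/
def ez (x : Fin ν → R) (s : Finset (Fin ν)) (j : ℤ) : R :=
  if 0 ≤ j then ∑ T ∈ Finset.powersetCard j.toNat s, ∏ i ∈ T, x i else 0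

theorem ez_neg (x : Fin ν → R) (s : Finset (Fin ν)) (j : ℤ) (hj : j < 0) : ez x s j = 0 := by
  rw [ez, if_neg (by omega)]

theorem ez_nat (x : Fin ν → R) (s : Finset (Fin ν)) (j : ℕ) :
    ez x s j = ∑ T ∈ Finset.powersetCard j s, ∏ i ∈ T, x i := by
  rw [ez, if_pos (by omega)]
  simp

theorem ez_empty (x : Fin ν → R) (j : ℤ) : ez x ∅ j = if j = 0 then 1 else 0 := by
  rcases lt_or_ge j 0 with h | h
  · rw [ez_neg _ _ _ h, if_neg h.ne]
  · lift j to ℕ using h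
    rw [ez_nat]
    cases j with
    | zero => simp
    | succ j =>
      rw [if_neg (by omega), Finset.powersetCard_eq_empty.2 (by simp)]
      simp

theorem ez_insert (x : Fin ν → R) (s : Finset (Fin ν)) (c : Fin ν) (hc : c ∉ s) (j : ℤ) :
    ez x (insert c s) j = ez x s j + x c * ez x s (j - 1) := by
  rcases lt_or_ge j 0 with h | h
  · rw [ez_neg _ _ _ h, ez_neg _ _ _ h, ez_neg _ _ _ (by omega)]; simp
  · lift j to ℕ using h
    cases j with
    | zero =>
      rw [ez_neg _ _ (_ - 1) (by simp), ez_nat, ez_nat]; simp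
    | succ j =>
      rw [show (((j + 1 : ℕ) : ℤ) - 1) = (j : ℤ) by push_cast; ring, ez_nat, ez_nat, ez_nat,
        Finset.powersetCard_succ_insert hc, Finset.sum_union, Finset.sum_image, Finset.mul_sum]
      · congr 1
        refine Finset.sum_congr rfl fun T hT => ?_
        rw [Finset.prod_insert]
        exact fun h => hc ((Finset.mem_powersetCard.1 hT).1 h)
      · intro T hT T' hT' he
        have n1 : c ∉ T := fun h => hc ((Finset.mem_powersetCard.1 hT).1 h)
        have n2 : c ∉ T' := fun h => hc ((Finset.mem_powersetCard.1 hT').1 h)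
        rw [← Finset.erase_insert n1, ← Finset.erase_insert n2]
        exact congrArg (fun Z => Finset.erase Z c) he
      · rw [Finset.disjoint_left]
        intro T hT hT'
        obtain ⟨T', _, rfl⟩ := Finset.mem_image.1 hT'
        exact hc ((Finset.mem_powersetCard.1 hT).1 (Finset.mem_insert_self _ _))

/-- two column Schur polynomial -/
def sh (x : Fin ν → R) (s : Finset (Fin ν)) (n k : ℤ) : R :=
  ez x s (n - k) * ez x s k - ez x s (n - k + 1) * ez x s (k - 1)

theorem sh_insert (x : Fin ν → R) (s : Finset (Fin ν)) (c : Fin ν) (hc : c ∉ s) (n k : ℤ) :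
    sh x (insert c s) n k = sh x s n k + x c * (sh x s (n - 1) k + sh x s (n - 1) (k - 1)) +
      x c ^ 2 * sh x s (n - 2) (k - 1) := by
  simp only [sh, ez_insert x s c hc]
  rw [show n - 1 - k = n - k - 1 by ring, show n - k - 1 + 1 = n - k by ring,
    show n - k + 1 - 1 = n - k by ring, show n - 1 - (k - 1) = n - k by ring,
    show n - 2 - (k - 1) = n - k - 1 by ring, show n - k - 1 + 1 = n - k by ring]
  ring

theorem sh_neg (x : Fin ν → R) (s : Finset (Fin ν)) (n k : ℤ) (hk : k < 0) :
    sh x s n k = 0 := by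
  rw [sh, ez_neg _ _ k hk, ez_neg _ _ (k - 1) (by omega)]; simp

theorem sh_tele (x : Fin ν → R) (s : Finset (Fin ν)) (n : ℤ) (i : ℕ) :
    ∑ k ∈ Finset.range (i + 1), sh x s n k = ez x s (n - i) * ez x s i := by
  induction i with
  | zero => simp [sh, ez_neg x s (-1) (by omega)]
  | succ i ih =>
    rw [Finset.sum_range_succ, ih, sh]
    rw [show n - ((i + 1 : ℕ) : ℤ) + 1 = n - i by push_cast; ring,
      show (((i + 1 : ℕ) : ℤ) - 1) = (i : ℤ) by push_cast; ring]
    ring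

/-- right-hand side -/
def RR (adj : Fin N → Fin N → Prop) (Q : R) (x : Fin ν → R) (V : Finset (Fin N))
    (s : Finset (Fin ν)) : R :=
  ∑ k ∈ Finset.range (N + 1), MM adj Q k V * sh x s V.card k

theorem card_le_N (V : Finset (Fin N)) : V.card ≤ N := by
  simpa using Finset.card_le_univ V

theorem shift_sum (hg : Good adj) (Q : R) (V : Finset (Fin N)) (g : ℤ → R) (hneg : g (-1) = 0) :
    ∑ k ∈ Finset.range (N + 1), MM adj Q k V * g ((k : ℤ) - 1) =
      ∑ k ∈ Finset.range (N + 1), MM adj Q (k + 1) V * g k := by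
  rw [Finset.sum_range_succ', Finset.sum_range_succ]
  rw [MM_zero_of_lt hg Q (N + 1) V (by have := card_le_N V; omega)]
  simp [hneg]

theorem XX_eq_RR (hg : Good adj) (Q : R) (x : Fin ν → R) (d : Fin ν) (s : Finset (Fin ν)) :
    ∀ V : Finset (Fin N), XX adj Q x d V s = RR adj Q x V s := by
  induction s using Finset.induction_on_min with
  | empty =>
    intro V
    rcases V.eq_empty_or_nonempty with rfl | hV
    · have h1 : Col d (∅ : Finset (Fin N)) (∅ : Finset (Fin ν)) = {fun _ => d} := by
        ext κ
        rw [mem_Col, Finset.mem_singleton]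
        constructor
        · intro h; funext a; exact h.2 a (by simp)
        · rintro rfl; simp
      have h2 : AO adj (∅ : Finset (Fin N)) = {fun _ _ => false} := by
        ext r
        simp only [AO, Finset.mem_filter, Finset.mem_univ, true_and, Finset.mem_singleton]
        constructor
        · intro h
          funext a b
          by_contra hc
          simp only [Bool.not_eq_false] at hc
          have := (h.1 a b hc).2.1
          simp at this
        · rintro rfl
          refine ⟨by simp, by simp [radj], ?_⟩
          intro a h
          rcases Relation.TransGen.tail'_iff.1 h with ⟨c, _, hc⟩
          simp at hc
      rw [RR, Finset.sum_range_succ', XX, h1, Finset.sum_singleton, Finset.sum_eq_zero]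
      · simp [MM, h2, Lead, ascOrient, term, Prp, ascV, sh, ez_empty]
      · intro k _
        rw [MM_zero_of_lt hg Q (k + 1) ∅ (by simp), zero_mul]
    · have h1 : Col d V (∅ : Finset (Fin ν)) = ∅ := by
        rw [Finset.eq_empty_iff_forall_notMem]
        intro κ hκ
        obtain ⟨a, ha⟩ := hV
        simpa using (mem_Col.1 hκ).1 a ha
      have := hV.card_pos
      rw [XX, h1, Finset.sum_empty, RR, Finset.sum_eq_zero]
      intro k _
      have hs : sh x (∅ : Finset (Fin ν)) V.card k = 0 := by
        simp only [sh, ez_empty]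
        split_ifs <;> first | omega | simp
      rw [hs, mul_zero]
  | insert c s hc ih =>
    intro V
    have hcs : c ∉ s := fun h => (hc c h).false
    rw [XX_insert Q x d V s c hc, sum_stab hg]
    simp only [ih]
    have t0 : x c ^ (∅ : Finset (Fin N)).card *
        (Q ^ wgt adj ∅ (V \ ∅) * RR adj Q x (V \ ∅) s) = RR adj Q x V s := by
      simp [wgt]
    have t1 : ∑ v ∈ V, x c ^ ({v} : Finset (Fin N)).card *
        (Q ^ wgt adj {v} (V \ {v}) * RR adj Q x (V \ {v}) s) =
        x c * ∑ k ∈ Finset.range (N + 1), (MM adj Q k V + MM adj Q (k + 1) V) *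
          sh x s ((V.card : ℤ) - 1) k := by
      have e : ∀ v ∈ V, x c ^ ({v} : Finset (Fin N)).card *
        (Q ^ wgt adj {v} (V \ {v}) * RR adj Q x (V \ {v}) s) =
          ∑ k ∈ Finset.range (N + 1), x c * (Q ^ wgt adj {v} (V \ {v}) *
            MM adj Q k (V \ {v}) * sh x s ((V.card : ℤ) - 1) k) := by
        intro v hv
        have hcd : (((V \ {v}).card : ℕ) : ℤ) = (V.card : ℤ) - 1 := by
          rw [Finset.card_sdiff_of_subset (by simpa using hv), Finset.card_singleton]
          have : 0 < V.card := Finset.card_pos.2 ⟨v, hv⟩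
          omega
        rw [RR, hcd, Finset.card_singleton, pow_one, Finset.mul_sum, Finset.mul_sum]
        refine Finset.sum_congr rfl fun k _ => ?_
        ring
      rw [Finset.sum_congr rfl e, Finset.sum_comm, Finset.mul_sum]
      refine Finset.sum_congr rfl fun k _ => ?_
      rw [← Finset.mul_sum, ← Finset.sum_mul]
      congr 1
      rcases lt_trichotomy (2 * k) V.card with h | h | h
      · rw [MM_key hg Q k V h]
      · have hs : sh x s ((V.card : ℤ) - 1) k = 0 := by
          rw [sh, ← h]
          push_cast
          rw [show (2 * (k : ℤ) - 1 - k) = (k : ℤ) - 1 by ring,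
            show ((k : ℤ) - 1 + 1) = k by ring]
          ring
        rw [hs, mul_zero, mul_zero]
      · rw [MM_zero_of_lt hg Q k V h, MM_zero_of_lt hg Q (k + 1) V (by omega),
          Finset.sum_eq_zero]
        · simp
        · intro v hv
          rw [MM_zero_of_lt hg Q k (V \ {v}), mul_zero]
          exact lt_of_le_of_lt (Finset.card_le_card Finset.sdiff_subset) h
    have t2 : ∑ S ∈ prs adj V, x c ^ S.card *
        (Q ^ wgt adj S (V \ S) * RR adj Q x (V \ S) s) =
        x c ^ 2 * ∑ k ∈ Finset.range (N + 1), MM adj Q (k + 1) V *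
          sh x s ((V.card : ℤ) - 2) k := by
      have e : ∀ S ∈ prs adj V, x c ^ S.card *
        (Q ^ wgt adj S (V \ S) * RR adj Q x (V \ S) s) =
          ∑ k ∈ Finset.range (N + 1), x c ^ 2 * (Q ^ wgt adj S (V \ S) *
            MM adj Q k (V \ S) * sh x s ((V.card : ℤ) - 2) k) := by
        intro S hS
        obtain ⟨hSV, hc2, _⟩ := mem_prs.1 hS
        have hcd : (((V \ S).card : ℕ) : ℤ) = (V.card : ℤ) - 2 := by
          rw [Finset.card_sdiff_of_subset hSV, hc2]
          have := Finset.card_le_card hSV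
          omega
        rw [RR, hcd, hc2, Finset.mul_sum, Finset.mul_sum]
        refine Finset.sum_congr rfl fun k _ => ?_
        ring
      rw [Finset.sum_congr rfl e, Finset.sum_comm, Finset.mul_sum]
      refine Finset.sum_congr rfl fun k _ => ?_
      rw [← Finset.mul_sum, ← Finset.sum_mul, MM_succ hg]
    rw [t0, t1, t2]
    conv_rhs => rw [RR]
    have e3 : ∀ k ∈ Finset.range (N + 1), MM adj Q k V * sh x (insert c s) V.card k =
        MM adj Q k V * sh x s V.card k + x c * (MM adj Q k V * sh x s ((V.card : ℤ) - 1) k) +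
        x c * (MM adj Q k V * sh x s ((V.card : ℤ) - 1) ((k : ℤ) - 1)) +
        x c ^ 2 * (MM adj Q k V * sh x s ((V.card : ℤ) - 2) ((k : ℤ) - 1)) := by
      intro k _
      rw [sh_insert x s c hcs]
      ring
    rw [Finset.sum_congr rfl e3, Finset.sum_add_distrib, Finset.sum_add_distrib,
      Finset.sum_add_distrib, ← Finset.mul_sum, ← Finset.mul_sum, ← Finset.mul_sum,
      shift_sum hg Q V (sh x s ((V.card : ℤ) - 1)) (sh_neg _ _ _ _ (by omega)),
      shift_sum hg Q V (sh x s ((V.card : ℤ) - 2)) (sh_neg _ _ _ _ (by omega)), RR]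
    simp only [add_mul, Finset.sum_add_distrib, mul_add]
    ring

end

theorem northBefore_mono (w : List Bool) : ∀ i j : ℕ, i ≤ j →
    northBefore w i ≤ northBefore w j := by
  induction w with
  | nil => intro i j _; simp [northBefore]
  | cons b w ih =>
    intro i j hij
    cases b with
    | true => simpa [northBefore] using ih i j hij
    | false =>
      cases i with
      | zero => simp [northBefore]
      | succ i =>
        cases j with
        | zero => omega
        | succ j => simpa [northBefore] using ih i j (by omega)

theorem good_dyck (D : List Bool) (hab : IsAbelian N D) : Good (dyckAdj N D) where
  symm := by intro a b h; exact h.symm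
  irr := by intro a h; simp [dyckAdj] at h
  left := by
    intro a b c h1 h2 h
    simp only [dyckAdj, Fin.lt_def] at *
    left
    omega
  right := by
    intro a b c h1 h2 h
    have := northBefore_mono D a b (by exact_mod_cast h1.le)
    simp only [dyckAdj, Fin.lt_def] at *
    left
    omega
  three := by
    intro a b c h1 h2
    by_contra hc
    simp only [dyckAdj, Fin.lt_def] at *
    have hcN := c.2
    have hb : northBefore D b ≤ c := by omega
    have ha : northBefore D a ≤ b := by omega
    have h0 := northBefore_mono D 0 a (by omega)
    have hl : (b : ℕ) + 1 ≤ ellG N D := by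
      unfold ellG
      rw [← Finset.card_range ((b : ℕ) + 1)]
      refine Finset.card_le_card fun i hi => ?_
      rw [Finset.mem_range] at hi
      have := northBefore_mono D i b (by omega)
      rw [Finset.mem_filter, Finset.mem_range]
      omega
    unfold IsAbelian lamG at hab
    rw [if_pos (by omega)] at hab
    omega

theorem lead_iff (r : Fin N → Fin N → Bool) (k : ℕ) (hk : k ∈ Finset.range (N + 1)) :
    Lead r Set.univ k ↔ k ≤ initialA N r := by
  unfold initialA
  constructor
  · intro h
    exact Finset.le_sup (f := id) (Finset.mem_filter.2 ⟨hk, h⟩)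
  · intro h
    obtain ⟨i, hi, he⟩ := Finset.exists_mem_eq_sup ((Finset.range (N + 1)).filter fun j =>
      ∀ k < j, numSources N r ((peel N r)^[k] Set.univ) = 2)
      ⟨0, Finset.mem_filter.2 ⟨by simp, by simp⟩⟩ id
    rw [he] at h
    intro j hj
    exact (Finset.mem_filter.1 hi).2 j (lt_of_lt_of_le hj h)

theorem initial_le (r : Fin N → Fin N → Bool) : initialA N r ≤ N := by
  unfold initialA
  refine Finset.sup_le fun j hj => ?_
  have := Finset.mem_range.1 (Finset.mem_filter.1 hj).1
  simp only [id]
  omega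

end AbelianProof

end

open scoped Classical in
/-- The `e`-expansion of `X_G` for an abelian Dyck graph, via acyclic
orientations. -/
theorem stmt12 (n : ℕ) (D : List Bool) (hD : IsDyck n D) (hab : IsAbelian n D)
    (ν : ℕ) (hν : 1 ≤ ν) :
    chromX n ν D =
      ∑ r ∈ Finset.univ.filter (fun r : Fin n → Fin n → Bool =>
          IsAcyclicOrientation n (dyckAdj n D) r),
        MvPolynomial.C (qq ^ ascOrient n r) *
          (MvPolynomial.esymm (Fin ν) F (n - initialA n r) *
            MvPolynomial.esymm (Fin ν) F (initialA n r)) := by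
  have hg := AbelianProof.good_dyck D hab
  have key := AbelianProof.XX_eq_RR hg (MvPolynomial.C qq : MvPolynomial (Fin ν) F)
    (fun i => MvPolynomial.X i) ⟨0, hν⟩ Finset.univ Finset.univ
  have hX : chromX n ν D = AbelianProof.XX (dyckAdj n D) (MvPolynomial.C qq)
      (fun i => (MvPolynomial.X i : MvPolynomial (Fin ν) F)) ⟨0, hν⟩ Finset.univ
        Finset.univ := by
    unfold chromX AbelianProof.XX
    have hcol : AbelianProof.Col (⟨0, hν⟩ : Fin ν) (Finset.univ : Finset (Fin n))
        Finset.univ = Finset.univ := by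
      ext κ
      simp [AbelianProof.mem_Col]
    rw [hcol]
    refine Finset.sum_congr rfl fun κ _ => ?_
    unfold AbelianProof.term
    have hp : κ ∈ properColorings n ν D ↔
        AbelianProof.Prp (dyckAdj n D) Finset.univ κ := by
      simp [properColorings, AbelianProof.Prp]
    have ha : ascColor n ν D κ = AbelianProof.ascV (dyckAdj n D) Finset.univ κ := by
      unfold ascColor AbelianProof.ascV
      rw [← Set.ncard_coe_finset]
      congr 1
      ext p
      simp
    simp only [hp, ha, map_pow]
  rw [hX, key, AbelianProof.RR]
  have hAO : Finset.univ.filter (fun r : Fin n → Fin n → Bool =>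
      IsAcyclicOrientation n (dyckAdj n D) r) =
      AbelianProof.AO (dyckAdj n D) Finset.univ := by
    unfold AbelianProof.AO
    have : AbelianProof.radj (dyckAdj n D) Finset.univ = dyckAdj n D := by
      funext a b
      simp [AbelianProof.radj]
    rw [this]
  rw [hAO]
  unfold AbelianProof.MM
  simp only [Finset.sum_mul]
  rw [Finset.sum_comm]
  refine Finset.sum_congr rfl fun r _ => ?_
  have hi := AbelianProof.initial_le r
  have h1 : ∀ k ∈ Finset.range (n + 1),
      (if AbelianProof.Lead r ((Finset.univ : Finset (Fin n)) : Set (Fin n)) k then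
        (MvPolynomial.C qq : MvPolynomial (Fin ν) F) ^ ascOrient n r else 0) *
        AbelianProof.sh (fun i => (MvPolynomial.X i : MvPolynomial (Fin ν) F)) Finset.univ
          ((Finset.univ : Finset (Fin n)).card : ℤ) k =
      if k ≤ initialA n r then MvPolynomial.C (qq ^ ascOrient n r) *
        AbelianProof.sh (fun i => (MvPolynomial.X i : MvPolynomial (Fin ν) F)) Finset.univ
          (n : ℤ) k else 0 := by
    intro k hk
    rw [Finset.coe_univ, Finset.card_univ, Fintype.card_fin, map_pow]
    simp only [AbelianProof.lead_iff r k hk, ite_mul, zero_mul]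
  rw [Finset.sum_congr rfl h1, ← Finset.sum_filter, ← Finset.mul_sum]
  have h2 : (Finset.range (n + 1)).filter (fun k => k ≤ initialA n r) =
      Finset.range (initialA n r + 1) := by
    ext k
    simp only [Finset.mem_filter, Finset.mem_range]
    omega
  rw [h2, AbelianProof.sh_tele, ← Nat.cast_sub hi, AbelianProof.ez_nat, AbelianProof.ez_nat]
  rfl
end
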